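/- For every b, b' > 0 there exists a constant c_{b,b'} > 0 such that for all n ≥ 1, every non-empty A ⊆ G_n with |A| ≤ b·ln(N_n) and every good vertex x ∈ G_A at the boundary of A, P^{G_n}-almost surely on the event { sup_{z∈A} |Ψ_{G_n}(z)| ≤ b'·√(ln(N_n)) } one has both | E^{G_n}[ Ψ_{G_n}(x) | σ(Ψ_{G_n}(y), y ∈ A) ] − (1/(d−1))·Ψ_{G_n}(x̄) | ≤ c_{b,b'}·(ln(N_n))^{−2} and | Var_{P^{G_n}}( Ψ_{G_n}(x) | σ(Ψ_{G_n}(y), y ∈ A) ) − d/(d−1) | ≤ c_{b,b'}·(ln(N_n))^{−3}, where x̄ denotes the unique neighbour of x in A. -/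

import Mathlib

open MeasureTheory ProbabilityTheory Filter Set
open scoped ENNReal NNReal ENat Classical

namespace GFF

variable {V : Type*} {T : Type*}

/-- Number of ordered adjacent pairs inside `U` (twice the number of edges of the induced
subgraph). -/
noncomputable def adjPairs (G : SimpleGraph V) (U : Set V) : ℕ :=
  Set.ncard {p : V × V | p.1 ∈ U ∧ p.2 ∈ U ∧ G.Adj p.1 p.2}

/-- `U` (assumed connected) induces a tree, i.e. has tree excess zero. -/
def TxZero (G : SimpleGraph V) (U : Set V) : Prop :=
  adjPairs G U = 2 * (Set.ncard U - 1)

/-- Closed ball of radius `R` for the graph distance. -/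
def gball (G : SimpleGraph V) (x : V) (R : ℕ) : Set V := {y | G.dist x y ≤ R}

/-- Set of vertices within distance `R` of the set `A`. -/
def sball (G : SimpleGraph V) (A : Set V) (R : ℕ) : Set V := {y | ∃ a ∈ A, G.dist a y ≤ R}

/-- Connected component containing `x` of the level set `{ω ≥ h}`. -/
def levelComp (G : SimpleGraph V) (h : ℝ) (ω : V → ℝ) (x : V) : Set V :=
  {y | ∃ p : G.Walk x y, ∀ v ∈ p.support, h ≤ ω v}

/-- `G` is `d`-regular. -/
def IsReg (G : SimpleGraph V) (d : ℕ) : Prop := ∀ v, Nat.card (G.neighborSet v) = d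

/-- `G` is an infinite `d`-regular tree. -/
def IsRegTree (G : SimpleGraph V) (d : ℕ) : Prop :=
  G.Connected ∧ G.IsAcyclic ∧ IsReg G d

/-- Transition matrix of SRW on a `d`-regular graph. -/
noncomputable def transP [Fintype V] (G : SimpleGraph V) (d : ℕ) : Matrix V V ℝ :=
  Matrix.of fun u v => if G.Adj u v then ((d : ℝ))⁻¹ else 0

/-- All non-zero eigenvalues of `I - P` are at least `β`. -/
def SpectralGapLB [Fintype V] (G : SimpleGraph V) (d : ℕ) (β : ℝ) : Prop :=
  ∀ (f : V → ℝ) (lam : ℝ),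
    Matrix.mulVec ((1 : Matrix V V ℝ) - transP G d) f = lam • f → f ≠ 0 → lam = 0 ∨ β ≤ lam

/-- `P_x[X̄_t = y]` for the continuous-time SRW with i.i.d. mean-one exponential holding
times (Poissonized jump chain). -/
noncomputable def heatK [Fintype V] (G : SimpleGraph V) (d : ℕ) (t : ℝ) (x y : V) : ℝ :=
  ∑' k : ℕ, Real.exp (-t) * t ^ k / (Nat.factorial k) * ((transP G d) ^ k) x y

/-- The zero-average Green function. -/
noncomputable def zGreen [Fintype V] (G : SimpleGraph V) (d Nn : ℕ) (x y : V) : ℝ :=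
  ∫ t in Set.Ioi (0 : ℝ), (heatK G d t x y - 1 / (Nn : ℝ))

/-- Green function of SRW on the `d`-regular tree. -/
noncomputable def treeGreen (G : SimpleGraph V) (d : ℕ) (x y : V) : ℝ :=
  (((d : ℝ) - 1) / ((d : ℝ) - 2)) * (((d : ℝ) - 1)⁻¹) ^ (G.dist x y)

/-- `μ` is the law of the centred Gaussian field with covariance `K`. -/
def IsGaussianField {I : Type*} (μ : Measure (I → ℝ)) (K : I → I → ℝ) : Prop :=
  IsProbabilityMeasure μ ∧
    ∀ c : I →₀ ℝ,
      μ.map (fun ω => ∑ i ∈ c.support, c i * ω i) =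
        gaussianReal 0 (Real.toNNReal (∑ i ∈ c.support, ∑ j ∈ c.support, c i * c j * K i j))

/-- One-step transition probability of SRW. -/
noncomputable def srwStep (G : SimpleGraph V) (d : ℕ) (u v : V) : ℝ≥0∞ :=
  if G.Adj u v then (d : ℝ≥0∞)⁻¹ else 0

/-- `W x` is the law of discrete-time SRW on `G` started at `x`. -/
def IsSRW [MeasurableSpace V] (G : SimpleGraph V) (d : ℕ) (W : V → Measure (ℕ → V)) : Prop :=
  (∀ x, IsProbabilityMeasure (W x)) ∧
    ∀ (x : V) (k : ℕ) (p : ℕ → V),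
      W x {ω | ∀ i ≤ k, ω i = p i} =
        (if p 0 = x then 1 else 0) * ∏ i ∈ Finset.range k, srwStep G d (p i) (p (i + 1))

/-- Entrance time of the set `A` (`⊤` if never entered). -/
noncomputable def hitTime (A : Set V) (ω : ℕ → V) : ℕ∞ :=
  sInf ((Nat.cast : ℕ → ℕ∞) '' {k | ω k ∈ A})

/-- Exit time of the set `U`. -/
noncomputable def exitTime (U : Set V) (ω : ℕ → V) : ℕ∞ := hitTime Uᶜ ω

/-- Position of the walk at the entrance time of `A`. -/
noncomputable def stopAt (A : Set V) (ω : ℕ → V) : V := ω (hitTime A ω).toNat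

/-- `π` is a cover tree of `G` at `x`. -/
def IsCoverMap (Gt : SimpleGraph T) (G : SimpleGraph V) (o : T) (x : V) (π : T → V) : Prop :=
  π o = x ∧ Function.Surjective π ∧ ∀ y : T, π '' (Gt.neighborSet y) = G.neighborSet (π y)

/-- `T_d^+`: the vertices of the tree whose geodesic to `o` avoids the fixed neighbour
`obar` of `o`. -/
def treePlus (Gt : SimpleGraph T) (o obar : T) : Set T :=
  {z | Gt.dist z obar = Gt.dist z o + 1}

/-- `S^+_{T_d}(o,R)`. -/
def spherePlus (Gt : SimpleGraph T) (o obar : T) (R : ℕ) : Set T :=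
  {z | z ∈ treePlus Gt o obar ∧ Gt.dist o z = R}

/-- The critical value for level-set percolation on the tree (w.r.t. the law `μT`). -/
noncomputable def hstar (Gt : SimpleGraph T) (o : T) (μT : Measure (T → ℝ)) : ℝ :=
  sInf {h : ℝ | μT {ω | (levelComp Gt h ω o).Infinite} = 0}

/-- The forward percolation probability `η⁺(h)`. -/
noncomputable def etaPlus (Gt : SimpleGraph T) (o obar : T) (μT : Measure (T → ℝ)) (h : ℝ) :
    ℝ :=
  (μT {ω | (levelComp Gt h ω o ∩ treePlus Gt o obar).Infinite}).toReal

/-- `s_n`. -/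
noncomputable def sn (d Nn : ℕ) : ℕ :=
  max 1 ⌊(8 : ℝ) * Real.logb ((d : ℝ) - 1) (Real.logb ((d : ℝ) - 1) (Nn : ℝ))⌋₊

/-- `c₀ = αβ/(d-1)`. -/
noncomputable def c0 (d : ℕ) (α β : ℝ) : ℝ := α * β / ((d : ℝ) - 1)

/-- `r_n`. -/
noncomputable def rn (d : ℕ) (α β : ℝ) (Nn : ℕ) : ℕ :=
  max 1 ⌊(c0 d α β / 18) * Real.logb ((d : ℝ) - 1) (Nn : ℝ)⌋₊

/-- `R_n`. -/
noncomputable def Rn (d : ℕ) (α β : ℝ) (Nn : ℕ) : ℕ :=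
  max 1 ⌊(c0 d α β / 6) * Real.logb ((d : ℝ) - 1) (Nn : ℝ)⌋₊

/-- `F_A(x,s)`: the vertices of `B(A,s) ∖ A` connected to `x` within `B(A,s) ∖ A`. -/
def Fset (G : SimpleGraph V) (A : Set V) (s : ℕ) (x : V) : Set V :=
  {z | ∃ p : G.Walk x z, ∀ v ∈ p.support, v ∈ sball G A s ∧ v ∉ A}

/-- Good vertex at the boundary of `A`. -/
def GoodVertex (G : SimpleGraph V) (A : Set V) (s : ℕ) (x : V) : Prop :=
  x ∉ A ∧ (∃! y, y ∈ A ∧ G.Adj x y) ∧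
    TxZero G (Fset G A s x) ∧
    ∀ y : V, y ∉ A → (∃ a ∈ A, G.Adj y a) → y ≠ x →
      ∀ p : G.Walk y x, (∀ v ∈ p.support, v ∉ A) → ∃ v ∈ p.support, v ∉ sball G A s

end GFF

/-!
Write `K` for the Green function and `q = 1 / (d - 1)`. Conditionally on the field on `A`, the
value at `x` is Gaussian, its mean is `κ ⬝ᵥ ω` for the weights `κ` supported on `A` that solve
`K κ = K δₓ` on `A`, and its variance is `K x x - (K κ) x`; so everything reduces to showing that
`κ` is close to `q δ_x̄`. Since `x` is good, the part of the graph that hangs off `A` at `x` is a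
`(d - 1)`-ary tree up to depth `s_n`. Let `g` decay geometrically from the value `d / (d - 1)` at
`x` along this tree and vanish elsewhere. The random-walk Laplacian sends `g` to `δₓ - q δ_x̄`, up
to an error carried by the leaves and of order `(log N)⁻⁸` in squared `ℓ²` norm. The spectral gap
turns this into `K (δₓ - q δ_x̄) ≈ g`, and `g` vanishes on `A`: thus `q δ_x̄` almost solves the
equations for `κ`. The quadratic form of `K` is bounded below on functions supported on the small
set `A`, because the Laplacian is bounded, so `κ ≈ q δ_x̄` and the variance is close to `g x`.
-/

namespace GFF

open scoped Matrix MatrixOrder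
open Asymptotics

/-! ### Spectral calculus for the random-walk Laplacian -/

lemma dotProduct_self_nonneg {ι : Type*} [Fintype ι] (f : ι → ℝ) : 0 ≤ f ⬝ᵥ f := by
  simpa using dotProduct_self_star_nonneg f

section SpectralCalculus

variable {V : Type*} [Fintype V] {L : Matrix V V ℝ}

lemma cfc_apply_eq_sum (hL : L.IsHermitian) (f : ℝ → ℝ) (x y : V) :
    cfc f L x y = ∑ i, f (hL.eigenvalues i) *
      (hL.eigenvectorBasis i x * hL.eigenvectorBasis i y) := by
  rw [hL.cfc_eq, Matrix.IsHermitian.cfc, Unitary.conjStarAlgAut_apply, Matrix.mul_apply]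
  refine Finset.sum_congr rfl fun i _ => ?_
  rw [Matrix.mul_diagonal, Matrix.star_apply, hL.eigenvectorUnitary_apply,
    hL.eigenvectorUnitary_apply]
  simp only [Function.comp_apply, RCLike.ofReal_real_eq_id, id_eq, star_trivial]
  ring

lemma hasSum_cfc_apply {F : ℕ → ℝ → ℝ} {f : ℝ → ℝ} (hL : L.IsHermitian)
    (h : ∀ r ∈ spectrum ℝ L, HasSum (F · r) (f r)) (x y : V) :
    HasSum (fun k => cfc (F k) L x y) (cfc f L x y) := by
  simp only [cfc_apply_eq_sum hL]
  exact hasSum_sum fun i _ => (h _ (hL.eigenvalues_mem_spectrum_real i)).mul_right _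

lemma integral_cfc_apply {α : Type*} [MeasurableSpace α] {ν : Measure α} {F : α → ℝ → ℝ}
    {f : ℝ → ℝ} (hL : L.IsHermitian) (hint : ∀ r ∈ spectrum ℝ L, Integrable (F · r) ν)
    (h : ∀ r ∈ spectrum ℝ L, ∫ t, F t r ∂ν = f r) (x y : V) :
    ∫ t, cfc (F t) L x y ∂ν = cfc f L x y := by
  have hmem := hL.eigenvalues_mem_spectrum_real
  simp only [cfc_apply_eq_sum hL]
  rw [integral_finsetSum _ fun i _ => (hint _ (hmem i)).mul_const _]
  simp only [integral_mul_const, h _ (hmem _)]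

lemma dotProduct_cfc_mulVec_nonneg {f : ℝ → ℝ} (h : ∀ r ∈ spectrum ℝ L, 0 ≤ f r) (v : V → ℝ) :
    0 ≤ v ⬝ᵥ cfc f L *ᵥ v := by
  simpa using (Matrix.nonneg_iff_posSemidef.1 (cfc_nonneg h)).dotProduct_mulVec_nonneg v

lemma continuousOn_spectrum (f : ℝ → ℝ) : ContinuousOn f (spectrum ℝ L) :=
  Matrix.finite_real_spectrum.continuousOn f

lemma cfc_const_sub (hL : L.IsHermitian) (c : ℝ) (f : ℝ → ℝ) :
    cfc (fun r => c - f r) L = c • 1 - cfc f L := by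
  have hL' : IsSelfAdjoint L := hL
  rw [cfc_sub _ _ L (continuousOn_spectrum _) (continuousOn_spectrum _), cfc_const c L,
    Algebra.algebraMap_eq_smul_one]

lemma mul_cfc_indicator_zero (hL : L.IsHermitian) : L * cfc (({0} : Set ℝ).indicator 1) L = 0 := by
  have hL' : IsSelfAdjoint L := hL
  nth_rw 1 [← cfc_id ℝ L]
  rw [← cfc_mul _ _ L (continuousOn_spectrum _) (continuousOn_spectrum _), ← cfc_zero ℝ L]
  congr 1 with r
  by_cases hr : r = 0 <;> simp [hr]

-- `0⁻¹ = 0` makes `cfc (·⁻¹) L` the pseudo-inverse of `L`.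
lemma cfc_inv_mul_self (hL : L.IsHermitian) :
    cfc (·⁻¹ : ℝ → ℝ) L * L = 1 - cfc (({0} : Set ℝ).indicator 1) L := by
  have hL' : IsSelfAdjoint L := hL
  nth_rw 2 [← cfc_id ℝ L]
  rw [← cfc_mul _ _ L (continuousOn_spectrum _) (continuousOn_spectrum _), ← one_smul ℝ 1,
    ← cfc_const_sub hL]
  congr 1 with r
  by_cases hr : r = 0 <;> simp [hr]

lemma exists_eigenvector_of_mem_spectrum {r : ℝ} (hr : r ∈ spectrum ℝ L) :
    ∃ f, f ≠ 0 ∧ L *ᵥ f = r • f := by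
  rw [← Matrix.spectrum_toLin', ← Module.End.hasEigenvalue_iff_mem_spectrum] at hr
  obtain ⟨f, hf⟩ := hr.exists_hasEigenvector
  exact ⟨f, hf.2, by simpa using hf.apply_eq_smul⟩

end SpectralCalculus

section RandomWalk

variable {V : Type*} [Fintype V] {G : SimpleGraph V} {d : ℕ}

lemma transP_isSymm : (transP G d).IsSymm := by
  ext x y
  simp [transP, G.adj_comm]

lemma transP_mulVec_apply (f : V → ℝ) (x : V) :
    (transP G d *ᵥ f) x = (d : ℝ)⁻¹ * ∑ y with G.Adj x y, f y := by
  simp [Matrix.mulVec, dotProduct, transP, Finset.sum_filter, Finset.mul_sum]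

lemma IsReg.card_filter_adj (hreg : IsReg G d) (x : V) :
    (Finset.univ.filter (G.Adj x)).card = d := by
  rw [← hreg x, Nat.card_eq_card_toFinset]
  congr 1
  ext y
  simp

lemma transP_mulVec_one (hd : d ≠ 0) (hreg : IsReg G d) : transP G d *ᵥ 1 = 1 := by
  ext x
  simp [transP_mulVec_apply, hreg.card_filter_adj, hd]

lemma sq_transP_mulVec_le (hd : d ≠ 0) (hreg : IsReg G d) (f : V → ℝ) (x : V) :
    (transP G d *ᵥ f) x ^ 2 ≤ (transP G d *ᵥ (f ^ 2)) x := by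
  calc (transP G d *ᵥ f) x ^ 2 = (d : ℝ)⁻¹ ^ 2 * (∑ y with G.Adj x y, f y) ^ 2 := by
        rw [transP_mulVec_apply, mul_pow]
    _ ≤ (d : ℝ)⁻¹ ^ 2 * (d * ∑ y with G.Adj x y, f y ^ 2) := by
        have h := sq_sum_le_card_mul_sum_sq (s := Finset.univ.filter (G.Adj x)) (f := f)
        rw [hreg.card_filter_adj] at h
        gcongr
    _ = (transP G d *ᵥ (f ^ 2)) x := by
        simp only [transP_mulVec_apply, Pi.pow_apply]
        field_simp

lemma transP_mulVec_dotProduct_self_le (hd : d ≠ 0) (hreg : IsReg G d) (f : V → ℝ) :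
    transP G d *ᵥ f ⬝ᵥ transP G d *ᵥ f ≤ f ⬝ᵥ f := by
  calc transP G d *ᵥ f ⬝ᵥ transP G d *ᵥ f = ∑ x, (transP G d *ᵥ f) x ^ 2 := by
        simp only [dotProduct, sq]
    _ ≤ 1 ⬝ᵥ transP G d *ᵥ (f ^ 2) := by
        rw [one_dotProduct]
        exact Finset.sum_le_sum fun x _ => sq_transP_mulVec_le hd hreg f x
    _ = f ⬝ᵥ f := by
        rw [Matrix.dotProduct_mulVec, ← Matrix.mulVec_transpose, transP_isSymm,
          transP_mulVec_one hd hreg, one_dotProduct]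
        simp only [dotProduct, sq, Pi.mul_apply]

/-- The generator `I - P` of the continuous-time simple random walk, up to sign. -/
noncomputable def laplacian (G : SimpleGraph V) (d : ℕ) : Matrix V V ℝ := 1 - transP G d

lemma laplacian_isHermitian : (laplacian G d).IsHermitian := by
  simpa [laplacian, Matrix.IsHermitian, Matrix.conjTranspose_eq_transpose_of_trivial]
    using transP_isSymm.eq

lemma laplacian_mulVec_apply (f : V → ℝ) (x : V) :
    (laplacian G d *ᵥ f) x = f x - (d : ℝ)⁻¹ * ∑ y with G.Adj x y, f y := by
  simp [laplacian, Matrix.sub_mulVec, transP_mulVec_apply]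

lemma laplacian_mulVec_one (hd : d ≠ 0) (hreg : IsReg G d) : laplacian G d *ᵥ 1 = 0 := by
  simp [laplacian, Matrix.sub_mulVec, transP_mulVec_one hd hreg]

-- Maximum principle: the set where a harmonic function is maximal is closed under adjacency.
lemma eq_of_laplacian_mulVec_eq_zero (hd : d ≠ 0) (hreg : IsReg G d) (hconn : G.Connected)
    {f : V → ℝ} (hf : laplacian G d *ᵥ f = 0) (x y : V) : f x = f y := by
  have := hconn.nonempty
  obtain ⟨z, hz⟩ := Finite.exists_max f
  have hstep (u v : V) (huv : G.Adj u v) (hu : f u = f z) : f v = f z := by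
    have havg : ∑ w with G.Adj u w, (f z - f w) = 0 := by
      have h0 : f u - (d : ℝ)⁻¹ * ∑ w with G.Adj u w, f w = 0 := by
        rw [← laplacian_mulVec_apply, hf, Pi.zero_apply]
      rw [Finset.sum_sub_distrib, Finset.sum_const, hreg.card_filter_adj, nsmul_eq_mul, ← hu]
      field_simp at h0
      linarith
    have := (Finset.sum_eq_zero_iff_of_nonneg fun w _ => sub_nonneg.2 (hz w)).1 havg v
      (by simpa using huv)
    linarith
  have hmax (w : V) : f w = f z := by
    obtain ⟨p⟩ := hconn.preconnected w z
    induction p with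
    | nil => rfl
    | cons h _ ih => exact hstep _ _ h.symm (ih hz hstep)
  rw [hmax x, hmax y]

lemma eq_zero_or_le_of_mem_spectrum_laplacian {β : ℝ} (hgap : SpectralGapLB G d β) {r : ℝ}
    (hr : r ∈ spectrum ℝ (laplacian G d)) : r = 0 ∨ β ≤ r := by
  obtain ⟨f, hf0, hf⟩ := exists_eigenvector_of_mem_spectrum hr
  exact hgap f r hf hf0

lemma le_two_of_mem_spectrum_laplacian (hd : d ≠ 0) (hreg : IsReg G d) {r : ℝ}
    (hr : r ∈ spectrum ℝ (laplacian G d)) : r ≤ 2 := by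
  obtain ⟨f, hf0, hf⟩ := exists_eigenvector_of_mem_spectrum hr
  have hP : transP G d *ᵥ f = (1 - r) • f := by
    rw [sub_smul, one_smul, ← hf, laplacian, Matrix.sub_mulVec, Matrix.one_mulVec, sub_sub_cancel]
  have hle : (1 - r) ^ 2 * (f ⬝ᵥ f) ≤ 1 * (f ⬝ᵥ f) := by
    simpa [hP, sq, mul_assoc] using transP_mulVec_dotProduct_self_le hd hreg f
  have hpos : 0 < f ⬝ᵥ f := (dotProduct_self_nonneg f).lt_of_ne' (mt dotProduct_self_eq_zero.1 hf0)
  nlinarith [le_of_mul_le_mul_right hle hpos]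

end RandomWalk

/-! ### The zero-average Green function -/

section Green

variable {V : Type*} [Fintype V] {G : SimpleGraph V} {d : ℕ} {β : ℝ}

lemma cfc_indicator_zero_laplacian_apply (hd : d ≠ 0) (hreg : IsReg G d) (hconn : G.Connected)
    (x y : V) : cfc (({0} : Set ℝ).indicator 1) (laplacian G d) x y = (Nat.card V : ℝ)⁻¹ := by
  have := hconn.nonempty
  have hL : (laplacian G d).IsHermitian := laplacian_isHermitian
  set E := cfc (({0} : Set ℝ).indicator 1) (laplacian G d) with hE
  have hcol (u v w : V) : E u w = E v w := by
    refine eq_of_laplacian_mulVec_eq_zero hd hreg hconn (f := E.col w) ?_ u v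
    ext z
    exact congrFun (congrFun (mul_cfc_indicator_zero hL) z) w
  have hsymm (u v : V) : E u v = E v u := by
    simp only [hE, cfc_apply_eq_sum hL, mul_comm]
  have hone : E *ᵥ 1 = 1 := by
    have h : (1 - E) *ᵥ 1 = 0 := by
      rw [← cfc_inv_mul_self hL, ← Matrix.mulVec_mulVec, laplacian_mulVec_one hd hreg,
        Matrix.mulVec_zero]
    rw [Matrix.sub_mulVec, Matrix.one_mulVec, sub_eq_zero] at h
    exact h.symm
  have hsum : ∑ z, E x z = 1 := by simpa [Matrix.mulVec, dotProduct] using congrFun hone x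
  have hconst (z : V) : E x z = E x y := by rw [hsymm x z, hsymm x y, hcol z y]
  rw [Finset.sum_congr rfl fun z _ => hconst z, Finset.sum_const, Finset.card_univ,
    nsmul_eq_mul] at hsum
  rw [Nat.card_eq_fintype_card]
  exact eq_inv_of_mul_eq_one_right hsum

lemma transP_pow_eq_cfc (k : ℕ) :
    transP G d ^ k = cfc (fun r : ℝ => (1 - r) ^ k) (laplacian G d) := by
  have hL : IsSelfAdjoint (laplacian G d) := laplacian_isHermitian
  rw [cfc_pow (1 - ·) k _ (continuousOn_spectrum _), cfc_const_sub hL,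
    cfc_id' ℝ (laplacian G d), one_smul, laplacian, sub_sub_cancel]

lemma heatK_eq_cfc (t : ℝ) (x y : V) :
    heatK G d t x y = cfc (fun r => Real.exp (-r * t)) (laplacian G d) x y := by
  have hL : (laplacian G d).IsHermitian := laplacian_isHermitian
  have hexp (r : ℝ) : HasSum (fun k : ℕ => Real.exp (-t) * t ^ k / k.factorial * (1 - r) ^ k)
      (Real.exp (-r * t)) := by
    have h := (NormedSpace.expSeries_div_hasSum_exp (t * (1 - r))).mul_left (Real.exp (-t))
    rw [← Real.exp_eq_exp_ℝ, ← Real.exp_add, show -t + t * (1 - r) = -r * t by ring] at h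
    refine h.congr_fun fun k => ?_
    rw [mul_pow]
    ring
  have hterm (k : ℕ) : Real.exp (-t) * t ^ k / k.factorial * (transP G d ^ k) x y =
      cfc (fun r => Real.exp (-t) * t ^ k / k.factorial * (1 - r) ^ k) (laplacian G d) x y := by
    rw [cfc_const_mul _ _ _ (continuousOn_spectrum _), transP_pow_eq_cfc, Matrix.smul_apply,
      smul_eq_mul]
  simp only [heatK, hterm]
  exact (hasSum_cfc_apply hL (fun r _ => hexp r) x y).tsum_eq

/-- The zero-average Green function as a matrix. -/
noncomputable def greenMatrix (G : SimpleGraph V) (d : ℕ) : Matrix V V ℝ :=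
  Matrix.of (zGreen G d (Nat.card V))

-- Integrate `exp (-r t)` over `t > 0` for each non-zero eigenvalue `r`; the eigenvalue `0`
-- contributes the equilibrium term `1 / N`.
lemma greenMatrix_eq_cfc (hd : d ≠ 0) (hβ : 0 < β) (hreg : IsReg G d) (hconn : G.Connected)
    (hgap : SpectralGapLB G d β) : greenMatrix G d = cfc (·⁻¹ : ℝ → ℝ) (laplacian G d) := by
  have hL : (laplacian G d).IsHermitian := laplacian_isHermitian
  have hcentred (t : ℝ) (x y : V) : heatK G d t x y - 1 / Nat.card V =
      cfc (fun r => Real.exp (-r * t) - ({0} : Set ℝ).indicator 1 r) (laplacian G d) x y := by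
    rw [cfc_sub _ _ _ (continuousOn_spectrum _) (continuousOn_spectrum _), Matrix.sub_apply,
      heatK_eq_cfc, cfc_indicator_zero_laplacian_apply hd hreg hconn, one_div]
  ext x y
  simp only [greenMatrix, Matrix.of_apply, zGreen, hcentred]
  refine integral_cfc_apply hL (fun r hr => ?_) (fun r hr => ?_) x y <;>
    rcases eq_zero_or_le_of_mem_spectrum_laplacian hgap hr with rfl | hβr
  · simp
  · have hr0 : 0 < r := hβ.trans_le hβr
    simpa [hr0.ne', IntegrableOn] using integrableOn_exp_mul_Ioi (neg_lt_zero.2 hr0) 0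
  · simp
  · have hr0 : 0 < r := hβ.trans_le hβr
    simpa [hr0.ne'] using integral_exp_mul_Ioi (neg_lt_zero.2 hr0) 0

lemma greenMatrix_posSemidef (hd : d ≠ 0) (hβ : 0 < β) (hreg : IsReg G d) (hconn : G.Connected)
    (hgap : SpectralGapLB G d β) : (greenMatrix G d).PosSemidef := by
  rw [greenMatrix_eq_cfc hd hβ hreg hconn hgap, ← Matrix.nonneg_iff_posSemidef]
  refine cfc_nonneg fun r hr => inv_nonneg.2 ?_
  rcases eq_zero_or_le_of_mem_spectrum_laplacian hgap hr with rfl | hβr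
  · rfl
  · exact hβ.le.trans hβr

lemma greenMatrix_isSymm (hd : d ≠ 0) (hβ : 0 < β) (hreg : IsReg G d) (hconn : G.Connected)
    (hgap : SpectralGapLB G d β) : (greenMatrix G d).IsSymm := by
  rw [Matrix.IsSymm, ← Matrix.conjTranspose_eq_transpose_of_trivial]
  exact (greenMatrix_posSemidef hd hβ hreg hconn hgap).isHermitian

lemma greenMatrix_mulVec_laplacian_mulVec (hd : d ≠ 0) (hβ : 0 < β) (hreg : IsReg G d)
    (hconn : G.Connected) (hgap : SpectralGapLB G d β) (f : V → ℝ) (x : V) :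
    (greenMatrix G d *ᵥ laplacian G d *ᵥ f) x = f x - (∑ y, f y) / Nat.card V := by
  rw [greenMatrix_eq_cfc hd hβ hreg hconn hgap, Matrix.mulVec_mulVec,
    cfc_inv_mul_self laplacian_isHermitian, Matrix.sub_mulVec, Matrix.one_mulVec, Pi.sub_apply]
  simp only [Matrix.mulVec, dotProduct, cfc_indicator_zero_laplacian_apply hd hreg hconn,
    ← Finset.mul_sum, div_eq_inv_mul]

lemma greenMatrix_mulVec_dotProduct_self_le (hd : d ≠ 0) (hβ : 0 < β) (hreg : IsReg G d)
    (hconn : G.Connected) (hgap : SpectralGapLB G d β) (f : V → ℝ) :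
    greenMatrix G d *ᵥ f ⬝ᵥ greenMatrix G d *ᵥ f ≤ β⁻¹ ^ 2 * (f ⬝ᵥ f) := by
  have hL : IsSelfAdjoint (laplacian G d) := laplacian_isHermitian
  have hsq : greenMatrix G d *ᵥ f ⬝ᵥ greenMatrix G d *ᵥ f =
      f ⬝ᵥ cfc (fun r : ℝ => r⁻¹ ^ 2) (laplacian G d) *ᵥ f := by
    rw [cfc_pow _ 2 _ (continuousOn_spectrum _), ← greenMatrix_eq_cfc hd hβ hreg hconn hgap, sq,
      ← Matrix.mulVec_mulVec, Matrix.dotProduct_mulVec f, ← Matrix.mulVec_transpose,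
      greenMatrix_isSymm hd hβ hreg hconn hgap]
  have hnonneg : 0 ≤ f ⬝ᵥ cfc (fun r : ℝ => β⁻¹ ^ 2 - r⁻¹ ^ 2) (laplacian G d) *ᵥ f := by
    refine dotProduct_cfc_mulVec_nonneg (fun r hr => sub_nonneg.2 ?_) f
    rcases eq_zero_or_le_of_mem_spectrum_laplacian hgap hr with rfl | hβr
    · simpa using sq_nonneg β
    · have : 0 < r := hβ.trans_le hβr
      gcongr
  rw [cfc_const_sub laplacian_isHermitian, Matrix.sub_mulVec, dotProduct_sub, ← hsq,
    Matrix.smul_mulVec, Matrix.one_mulVec, dotProduct_smul, smul_eq_mul] at hnonneg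
  exact sub_nonneg.1 hnonneg

-- The eigenvalues of `laplacian G d` are at most `2`, so those of its pseudo-inverse are at
-- least `1 / 2` off the constants.
lemma dotProduct_self_sub_sq_sum_div_le (hd : d ≠ 0) (hβ : 0 < β) (hreg : IsReg G d)
    (hconn : G.Connected) (hgap : SpectralGapLB G d β) (f : V → ℝ) :
    f ⬝ᵥ f - (∑ x, f x) ^ 2 / Nat.card V ≤ 2 * (f ⬝ᵥ greenMatrix G d *ᵥ f) := by
  have hnonneg : 0 ≤ f ⬝ᵥ cfc (fun r : ℝ => 2 * r⁻¹ - (1 - ({0} : Set ℝ).indicator 1 r))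
      (laplacian G d) *ᵥ f := by
    refine dotProduct_cfc_mulVec_nonneg (fun r hr => ?_) f
    rcases eq_zero_or_le_of_mem_spectrum_laplacian hgap hr with rfl | hβr
    · simp
    · have hr0 : 0 < r := hβ.trans_le hβr
      have h2 : 1 ≤ 2 * r⁻¹ := by
        rw [← div_eq_mul_inv, one_le_div hr0]
        exact le_two_of_mem_spectrum_laplacian hd hreg hr
      simpa [hr0.ne'] using h2
  rw [cfc_sub _ _ _ (continuousOn_spectrum _) (continuousOn_spectrum _),
    cfc_const_mul _ _ _ (continuousOn_spectrum _), cfc_const_sub laplacian_isHermitian,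
    one_smul, ← greenMatrix_eq_cfc hd hβ hreg hconn hgap] at hnonneg
  have hproj : f ⬝ᵥ cfc (({0} : Set ℝ).indicator 1) (laplacian G d) *ᵥ f =
      (∑ x, f x) ^ 2 / Nat.card V := by
    simp only [Matrix.mulVec, dotProduct, cfc_indicator_zero_laplacian_apply hd hreg hconn,
      ← Finset.mul_sum, ← Finset.sum_mul]
    ring
  simp only [Matrix.sub_mulVec, dotProduct_sub, Matrix.smul_mulVec, dotProduct_smul,
    Matrix.one_mulVec, hproj, smul_eq_mul] at hnonneg
  linarith

end Green

/-! ### Kriging weights -/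

section Support

variable {V : Type*} [Fintype V] {S : Set V} {u f : V → ℝ}

lemma dotProduct_eq_sum_of_support_subset [Fintype S] (hu : Function.support u ⊆ S) (f : V → ℝ) :
    u ⬝ᵥ f = ∑ y ∈ S.toFinset, u y * f y := by
  refine (Finset.sum_subset (Finset.subset_univ _) fun y _ hy => ?_).symm
  rw [Function.notMem_support.1 fun h => hy (Set.mem_toFinset.2 (hu h)), zero_mul]

lemma dotProduct_eq_zero_of_eqOn_zero (hu : Function.support u ⊆ S) (hf : EqOn f 0 S) :
    u ⬝ᵥ f = 0 := by
  refine Finset.sum_eq_zero fun y _ => ?_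
  by_cases hy : y ∈ S
  · rw [hf hy, Pi.zero_apply, mul_zero]
  · rw [Function.notMem_support.1 fun h => hy (hu h), zero_mul]

lemma sq_dotProduct_le_of_support_subset [Fintype S] (hu : Function.support u ⊆ S) (f : V → ℝ) :
    (u ⬝ᵥ f) ^ 2 ≤ (u ⬝ᵥ u) * ∑ y ∈ S.toFinset, f y ^ 2 := by
  rw [dotProduct_eq_sum_of_support_subset hu, dotProduct_eq_sum_of_support_subset hu]
  simpa only [sq (u _)] using Finset.sum_mul_sq_le_sq_mul_sq S.toFinset u f

end Support

section Kriging

variable {V : Type*} [Fintype V] {K : Matrix V V ℝ} {A : Set V} {x : V} {κ v η : V → ℝ} {γ ε : ℝ}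

/-- `κ` are the weights on `A` of the best linear predictor (kriging predictor) `∑ y, κ y * ω y`
of the value at `x` of a centred field with covariance `K`: they are supported on `A` and solve
the normal equations `K κ = K(·, x)` on `A`. -/
structure IsKriging (K : Matrix V V ℝ) (A : Set V) (x : V) (κ : V → ℝ) : Prop where
  support_subset : Function.support κ ⊆ A
  normal_equations : EqOn (K *ᵥ κ) (K.col x) A

/-- The quadratic form of `K` is at least `γ` times the squared `ℓ²` norm on vectors supported
on `A`. -/
def CoerciveOn (K : Matrix V V ℝ) (A : Set V) (γ : ℝ) : Prop :=
  ∀ η : V → ℝ, Function.support η ⊆ A → γ * (η ⬝ᵥ η) ≤ η ⬝ᵥ K *ᵥ η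

lemma CoerciveOn.mono {γ' : ℝ} (hK : CoerciveOn K A γ) (h : γ' ≤ γ) : CoerciveOn K A γ' :=
  fun η hη => (mul_le_mul_of_nonneg_right h (dotProduct_self_nonneg η)).trans (hK η hη)

lemma CoerciveOn.eq_zero (hK : CoerciveOn K A γ) (hγ : 0 < γ) (hη : Function.support η ⊆ A)
    (h : EqOn (K *ᵥ η) 0 A) : η = 0 := by
  have hle := hK η hη
  rw [dotProduct_eq_zero_of_eqOn_zero hη h] at hle
  exact dotProduct_self_eq_zero.1
    ((nonpos_of_mul_nonpos_right hle hγ).antisymm (dotProduct_self_nonneg η))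

lemma CoerciveOn.exists_isKriging (hK : CoerciveOn K A γ) (hγ : 0 < γ) (x : V) :
    ∃ κ, IsKriging K A x κ := by
  let E : (A → ℝ) →ₗ[ℝ] V → ℝ := Function.ExtendByZero.linearMap ℝ (↑)
  have hE (f : A → ℝ) : Function.support (E f) ⊆ A := by
    intro y hy
    by_contra hyA
    exact hy (Function.extend_apply' f (0 : V → ℝ) y fun ⟨a, ha⟩ => hyA (ha ▸ a.2))
  have hEa (f : A → ℝ) (a : A) : E f a = f a := Subtype.val_injective.extend_apply f 0 a
  let T : (A → ℝ) →ₗ[ℝ] A → ℝ := LinearMap.funLeft ℝ ℝ ((↑) : A → V) ∘ₗ K.mulVecLin ∘ₗ E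
  have hinj : Function.Injective T := by
    refine (injective_iff_map_eq_zero T).2 fun f hf => ?_
    have hf0 : E f = 0 := hK.eq_zero hγ (hE f) fun a ha => congrFun hf ⟨a, ha⟩
    ext a
    rw [← hEa f a, hf0, Pi.zero_apply, Pi.zero_apply]
  obtain ⟨f, hf⟩ := LinearMap.injective_iff_surjective.1 hinj fun a => K a x
  exact ⟨E f, hE f, fun a ha => congrFun hf ⟨a, ha⟩⟩

lemma CoerciveOn.mul_dotProduct_mulVec_le (hK : CoerciveOn K A γ) (hγ : 0 ≤ γ)
    (hη : Function.support η ⊆ A) (hε : ∑ a ∈ A.toFinset, (K *ᵥ η) a ^ 2 ≤ ε) :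
    γ * (η ⬝ᵥ K *ᵥ η) ≤ ε := by
  have hn : 0 ≤ η ⬝ᵥ η := dotProduct_self_nonneg η
  have hcoer : γ * (η ⬝ᵥ η) ≤ η ⬝ᵥ K *ᵥ η := hK η hη
  have hcs : (η ⬝ᵥ K *ᵥ η) ^ 2 ≤ (η ⬝ᵥ η) * ε :=
    (sq_dotProduct_le_of_support_subset hη _).trans (mul_le_mul_of_nonneg_left hε hn)
  have hε0 : 0 ≤ ε := (Finset.sum_nonneg fun _ _ => sq_nonneg _).trans hε
  rcases (mul_nonneg hγ hn |>.trans hcoer).eq_or_lt with hq | hq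
  · rwa [← hq, mul_zero]
  · refine le_of_mul_le_mul_right ?_ hq
    calc γ * (η ⬝ᵥ K *ᵥ η) * (η ⬝ᵥ K *ᵥ η) = γ * (η ⬝ᵥ K *ᵥ η) ^ 2 := by ring
      _ ≤ γ * ((η ⬝ᵥ η) * ε) := by gcongr
      _ = ε * (γ * (η ⬝ᵥ η)) := by ring
      _ ≤ ε * (η ⬝ᵥ K *ᵥ η) := by gcongr

lemma CoerciveOn.sq_mul_dotProduct_self_le (hK : CoerciveOn K A γ) (hγ : 0 ≤ γ)
    (hη : Function.support η ⊆ A) (hε : ∑ a ∈ A.toFinset, (K *ᵥ η) a ^ 2 ≤ ε) :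
    γ ^ 2 * (η ⬝ᵥ η) ≤ ε :=
  calc γ ^ 2 * (η ⬝ᵥ η) = γ * (γ * (η ⬝ᵥ η)) := by ring
    _ ≤ γ * (η ⬝ᵥ K *ᵥ η) := mul_le_mul_of_nonneg_left (hK η hη) hγ
    _ ≤ ε := hK.mul_dotProduct_mulVec_le hγ hη hε

namespace IsKriging

lemma eqOn_residual (hκ : IsKriging K A x κ) : EqOn (K *ᵥ (Pi.single x 1 - κ)) 0 A := by
  intro a ha
  rw [Matrix.mulVec_sub, Matrix.mulVec_single_one, Pi.sub_apply, hκ.normal_equations ha, sub_self,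
    Pi.zero_apply]

lemma residual_dotProduct_mulVec (hκ : IsKriging K A x κ) :
    (Pi.single x 1 - κ) ⬝ᵥ K *ᵥ (Pi.single x 1 - κ) = K x x - (K *ᵥ κ) x := by
  conv_lhs => rw [sub_dotProduct]
  rw [dotProduct_eq_zero_of_eqOn_zero hκ.support_subset hκ.eqOn_residual, sub_zero,
    single_one_dotProduct, Matrix.mulVec_sub, Matrix.mulVec_single_one]
  rfl

lemma support_sub_subset (hκ : IsKriging K A x κ) (hv : Function.support v ⊆ A) :
    Function.support (κ - v) ⊆ A :=
  (Function.support_sub κ v).trans (union_subset hκ.support_subset hv)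

lemma eqOn_mulVec_sub (hκ : IsKriging K A x κ) :
    EqOn (K *ᵥ (κ - v)) (K *ᵥ (Pi.single x 1 - v)) A := by
  intro a ha
  simp only [Matrix.mulVec_sub, Matrix.mulVec_single_one, Pi.sub_apply, hκ.normal_equations ha]

-- Pythagoras: the residual `Pi.single x 1 - κ` is `K`-orthogonal to `κ - v`.
lemma dotProduct_mulVec_eq_add (hκ : IsKriging K A x κ) (hK : K.IsSymm)
    (hv : Function.support v ⊆ A) :
    (Pi.single x 1 - v) ⬝ᵥ K *ᵥ (Pi.single x 1 - v) =
      K x x - (K *ᵥ κ) x + (κ - v) ⬝ᵥ K *ᵥ (κ - v) := by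
  have horth : (κ - v) ⬝ᵥ K *ᵥ (Pi.single x 1 - κ) = 0 :=
    dotProduct_eq_zero_of_eqOn_zero (hκ.support_sub_subset hv) hκ.eqOn_residual
  have horth' : (Pi.single x 1 - κ) ⬝ᵥ K *ᵥ (κ - v) = 0 := by
    rw [Matrix.dotProduct_mulVec, ← Matrix.mulVec_transpose, hK.eq, dotProduct_comm, horth]
  rw [← hκ.residual_dotProduct_mulVec, ← sub_add_sub_cancel (Pi.single x 1) κ v, Matrix.mulVec_add,
    dotProduct_add, add_dotProduct, add_dotProduct, horth, horth']
  ring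

lemma sum_sq_mulVec_sub_le (hκ : IsKriging K A x κ) {g : V → ℝ} (hg : EqOn g 0 A)
    (hε : ∑ y ∈ (insert x A).toFinset, ((K *ᵥ (Pi.single x 1 - v)) y - g y) ^ 2 ≤ ε) :
    ∑ a ∈ A.toFinset, (K *ᵥ (κ - v)) a ^ 2 ≤ ε := by
  refine le_trans ?_ hε
  calc ∑ a ∈ A.toFinset, (K *ᵥ (κ - v)) a ^ 2
      = ∑ a ∈ A.toFinset, ((K *ᵥ (Pi.single x 1 - v)) a - g a) ^ 2 := by
        refine Finset.sum_congr rfl fun a ha => ?_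
        rw [hκ.eqOn_mulVec_sub (Set.mem_toFinset.1 ha), hg (Set.mem_toFinset.1 ha), Pi.zero_apply,
          sub_zero]
    _ ≤ _ := Finset.sum_le_sum_of_subset_of_nonneg (Set.toFinset_mono (subset_insert x A))
        fun _ _ _ => sq_nonneg _

lemma sq_mul_dotProduct_sub_self_le (hκ : IsKriging K A x κ) (hA : CoerciveOn K A γ)
    (hγ : 0 ≤ γ) (hv : Function.support v ⊆ A) {g : V → ℝ} (hg : EqOn g 0 A)
    (hε : ∑ y ∈ (insert x A).toFinset, ((K *ᵥ (Pi.single x 1 - v)) y - g y) ^ 2 ≤ ε) :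
    γ ^ 2 * ((κ - v) ⬝ᵥ (κ - v)) ≤ ε :=
  hA.sq_mul_dotProduct_self_le hγ (hκ.support_sub_subset hv) (hκ.sum_sq_mulVec_sub_le hg hε)

-- If `g` vanishes on `A` and `K w ≈ g` near `A` for `w = Pi.single x 1 - v`, then `v` almost
-- solves the normal equations and `w ⬝ᵥ K *ᵥ w ≈ w ⬝ᵥ g = g x`.
lemma abs_variance_sub_le (hκ : IsKriging K A x κ) (hK : K.IsSymm) (hA : CoerciveOn K A γ)
    (hγ : 0 < γ) (hv : Function.support v ⊆ A) {g : V → ℝ} (hg : EqOn g 0 A)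
    (hε : ∑ y ∈ (insert x A).toFinset, ((K *ᵥ (Pi.single x 1 - v)) y - g y) ^ 2 ≤ ε) :
    |K x x - (K *ᵥ κ) x - g x| ≤
      √(((Pi.single x 1 - v) ⬝ᵥ (Pi.single x 1 - v)) * ε) + ε / γ := by
  set w : V → ℝ := Pi.single x 1 - v with hw
  have hsupp : Function.support w ⊆ insert x A :=
    (Function.support_sub _ v).trans (union_subset
      (Pi.support_single_subset.trans (singleton_subset_iff.2 (mem_insert x A)))
      (hv.trans (subset_insert x A)))
  have hwg : w ⬝ᵥ g = g x := by
    rw [hw, sub_dotProduct, dotProduct_eq_zero_of_eqOn_zero hv hg, sub_zero, single_one_dotProduct]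
  have happrox : |w ⬝ᵥ (K *ᵥ w - g)| ≤ √((w ⬝ᵥ w) * ε) :=
    Real.abs_le_sqrt ((sq_dotProduct_le_of_support_subset hsupp _).trans
      (mul_le_mul_of_nonneg_left hε (dotProduct_self_nonneg w)))
  have hpyth := hκ.dotProduct_mulVec_eq_add hK hv
  set Q : ℝ := (κ - v) ⬝ᵥ K *ᵥ (κ - v)
  have hQ : 0 ≤ Q := (mul_nonneg hγ.le (dotProduct_self_nonneg _)).trans
    (hA _ (hκ.support_sub_subset hv))
  have hQle : Q ≤ ε / γ := (le_div_iff₀' hγ).2 (hA.mul_dotProduct_mulVec_le hγ.le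
    (hκ.support_sub_subset hv) (hκ.sum_sq_mulVec_sub_le hg hε))
  calc |K x x - (K *ᵥ κ) x - g x| = |w ⬝ᵥ (K *ᵥ w - g) - Q| := by
        rw [dotProduct_sub, hwg, hpyth]
        ring_nf
    _ ≤ |w ⬝ᵥ (K *ᵥ w - g)| + |Q| := abs_sub _ _
    _ ≤ √((w ⬝ᵥ w) * ε) + ε / γ := add_le_add happrox ((abs_of_nonneg hQ).trans_le hQle)

end IsKriging

end Kriging

section GreenKriging

variable {V : Type*} [Fintype V] {G : SimpleGraph V} {d : ℕ} {β : ℝ}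

lemma coerciveOn_greenMatrix (hd : d ≠ 0) (hβ : 0 < β) (hreg : IsReg G d) (hconn : G.Connected)
    (hgap : SpectralGapLB G d β) (A : Set V) :
    CoerciveOn (greenMatrix G d) A ((1 - A.ncard / Nat.card V) / 2) := by
  intro η hη
  have hsum : (∑ y, η y) ^ 2 ≤ (η ⬝ᵥ η) * A.ncard := by
    simpa [dotProduct, Set.ncard_eq_toFinset_card'] using
      sq_dotProduct_le_of_support_subset hη 1
  have hcoer := dotProduct_self_sub_sq_sum_div_le hd hβ hreg hconn hgap η
  have hdiv : (∑ y, η y) ^ 2 / Nat.card V ≤ (η ⬝ᵥ η) * A.ncard / Nat.card V := by gcongr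
  linarith [show (1 - A.ncard / Nat.card V) / 2 * (η ⬝ᵥ η) =
    (η ⬝ᵥ η - (η ⬝ᵥ η) * A.ncard / Nat.card V) / 2 by ring]

lemma sum_sq_greenMatrix_mulVec_sub_le (hd : d ≠ 0) (hβ : 0 < β) (hreg : IsReg G d)
    (hconn : G.Connected) (hgap : SpectralGapLB G d β) {g w e : V → ℝ}
    (hg : laplacian G d *ᵥ g = w + e) (S : Finset V) :
    ∑ y ∈ S, ((greenMatrix G d *ᵥ w) y - g y) ^ 2 ≤
      2 * (S.card * ((∑ y, g y) / Nat.card V) ^ 2 + β⁻¹ ^ 2 * (e ⬝ᵥ e)) := by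
  set m : ℝ := (∑ y, g y) / Nat.card V
  set h : V → ℝ := greenMatrix G d *ᵥ e
  have herr (y : V) : (greenMatrix G d *ᵥ w) y - g y = -(m + h y) := by
    have := greenMatrix_mulVec_laplacian_mulVec hd hβ hreg hconn hgap g y
    rw [hg, Matrix.mulVec_add, Pi.add_apply] at this
    linarith
  have hh2 : ∑ y ∈ S, h y ^ 2 ≤ β⁻¹ ^ 2 * (e ⬝ᵥ e) := by
    refine le_trans ?_ (greenMatrix_mulVec_dotProduct_self_le hd hβ hreg hconn hgap e)
    simp only [dotProduct, ← sq]
    exact Finset.sum_le_sum_of_subset_of_nonneg (Finset.subset_univ S) fun _ _ _ => sq_nonneg _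
  calc ∑ y ∈ S, ((greenMatrix G d *ᵥ w) y - g y) ^ 2 = ∑ y ∈ S, (m + h y) ^ 2 := by
        simp only [herr, neg_sq]
    _ ≤ ∑ y ∈ S, 2 * (m ^ 2 + h y ^ 2) := Finset.sum_le_sum fun y _ => add_sq_le
    _ = 2 * (S.card * m ^ 2 + ∑ y ∈ S, h y ^ 2) := by
        rw [← Finset.mul_sum, Finset.sum_add_distrib, Finset.sum_const, nsmul_eq_mul]
    _ ≤ _ := by gcongr

end GreenKriging

/-! ### Branches at a good vertex -/

section Branch

variable {V : Type*} {G : SimpleGraph V} {d s : ℕ} {x z w : V} {S : Set V} {depth : V → ℕ}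
  {parent : V → V}

/-- `S` carries the first `s` generations of a rooted tree in `G`, with root `x` at depth `0` and
each vertex of depth less than `s - 1` having all its neighbours in `S`, apart from `parent x`. The
parent of the root lies outside `S`, and the root is its only neighbour in `S`. -/
structure IsBranch (G : SimpleGraph V) (x : V) (s : ℕ) (S : Set V) (depth : V → ℕ)
    (parent : V → V) : Prop where
  root_mem : x ∈ S
  depth_root : depth x = 0
  depth_lt : ∀ {z}, z ∈ S → depth z < s
  adj_parent : ∀ {z}, z ∈ S → G.Adj z (parent z)
  parent_root_notMem : parent x ∉ S
  parent_mem : ∀ {z}, z ∈ S → z ≠ x → parent z ∈ S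
  depth_parent : ∀ {z}, z ∈ S → z ≠ x → depth (parent z) + 1 = depth z
  depth_child : ∀ {z w}, z ∈ S → w ∈ S → G.Adj z w → w ≠ parent z → depth w = depth z + 1
  child_mem : ∀ {z w}, z ∈ S → G.Adj z w → w ≠ parent z → depth z + 1 < s → w ∈ S
  eq_root_of_adj : ∀ {z}, z ∈ S → G.Adj z (parent x) → z = x

/-- The Green function at `x` of the random walk on the `d`-regular tree killed on reaching a fixed
neighbour of `x`, transplanted to the branch `S` with the given depth function. -/
noncomputable def branchPotential (d : ℕ) (S : Set V) (depth : V → ℕ) : V → ℝ :=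
  S.indicator fun z => (d : ℝ) / (d - 1) * ((d : ℝ) - 1)⁻¹ ^ depth z

/-- The restriction of `branchPotential` to the last of the `s` generations. -/
noncomputable def leafPotential (d s : ℕ) (S : Set V) (depth : V → ℕ) : V → ℝ :=
  {z | depth z + 1 = s}.indicator (branchPotential d S depth)

lemma cast_sub_one_pos (hd : 1 < d) : (0 : ℝ) < d - 1 := sub_pos.2 (Nat.one_lt_cast.2 hd)

lemma branchPotential_nonneg (hd : 1 < d) (z : V) : 0 ≤ branchPotential d S depth z :=
  indicator_nonneg (fun z _ => by have := cast_sub_one_pos hd; positivity) z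

lemma leafPotential_nonneg (hd : 1 < d) (z : V) : 0 ≤ leafPotential d s S depth z :=
  indicator_nonneg (fun z _ => branchPotential_nonneg hd z) z

/-- The vertices of generation `j` of the branch. -/
noncomputable def generation [Fintype V] (S : Set V) (depth : V → ℕ) (j : ℕ) : Finset V :=
  {z | z ∈ S ∧ depth z = j}

lemma mem_generation [Fintype V] {j : ℕ} : z ∈ generation S depth j ↔ z ∈ S ∧ depth z = j := by
  simp [generation]

lemma branchPotential_of_mem_generation [Fintype V] {j : ℕ} (hz : z ∈ generation S depth j) :
    branchPotential d S depth z = d / (d - 1) * ((d : ℝ) - 1)⁻¹ ^ j := by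
  obtain ⟨hzS, rfl⟩ := mem_generation.1 hz
  exact indicator_of_mem hzS _

namespace IsBranch

lemma branchPotential_root (h : IsBranch G x s S depth parent) :
    branchPotential d S depth x = d / (d - 1) := by
  rw [branchPotential, indicator_of_mem h.root_mem, h.depth_root, pow_zero, mul_one]

lemma branchPotential_parent (h : IsBranch G x s S depth parent) (hd : 1 < d) (hz : z ∈ S) :
    branchPotential d S depth (parent z) =
      (d - 1) * branchPotential d S depth z - d * Pi.single (M := fun _ => ℝ) x 1 z := by
  have hd' := (cast_sub_one_pos hd).ne'
  by_cases hzx : z = x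
  · rw [hzx, h.branchPotential_root, branchPotential, indicator_of_notMem h.parent_root_notMem,
      Pi.single_eq_same]
    field_simp
    ring
  · rw [branchPotential, indicator_of_mem (h.parent_mem hz hzx), indicator_of_mem hz,
      ← h.depth_parent hz hzx, pow_succ, Pi.single_eq_of_ne hzx]
    field_simp
    ring

lemma branchPotential_child (h : IsBranch G x s S depth parent) (hd : 1 < d) (hz : z ∈ S)
    (hzw : G.Adj z w) (hw : w ≠ parent z) :
    (d - 1) * branchPotential d S depth w =
      branchPotential d S depth z - leafPotential d s S depth z := by
  have hd' := (cast_sub_one_pos hd).ne'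
  rcases (Nat.succ_le_of_lt (h.depth_lt hz)).eq_or_lt with hs | hs
  · have hwS : w ∉ S := fun hwS =>
      (h.depth_lt hwS).ne ((h.depth_child hz hwS hzw hw).trans hs)
    rw [leafPotential, indicator_of_mem (show z ∈ {z | depth z + 1 = s} from hs), sub_self,
      branchPotential, indicator_of_notMem hwS, mul_zero]
  · have hwS := h.child_mem hz hzw hw hs
    rw [leafPotential, indicator_of_notMem (show z ∉ {z | depth z + 1 = s} from hs.ne),
      branchPotential, indicator_of_mem hwS, indicator_of_mem hz, h.depth_child hz hwS hzw hw,
      pow_succ]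
    field_simp
    ring

variable [Fintype V]

lemma sum_branchPotential_adj (h : IsBranch G x s S depth parent) (hd : 1 < d)
    (hreg : IsReg G d) (hz : z ∈ S) :
    ∑ y with G.Adj z y, branchPotential d S depth y =
      d * branchPotential d S depth z - d * Pi.single (M := fun _ => ℝ) x 1 z -
        leafPotential d s S depth z := by
  have hd' := (cast_sub_one_pos hd).ne'
  have hmem : parent z ∈ Finset.univ.filter (G.Adj z) := by simpa using h.adj_parent hz
  have hchild : ∀ w ∈ (Finset.univ.filter (G.Adj z)).erase (parent z),
      branchPotential d S depth w =
        (branchPotential d S depth z - leafPotential d s S depth z) / (d - 1) := by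
    intro w hw
    obtain ⟨hwp, hw⟩ := Finset.mem_erase.1 hw
    rw [eq_div_iff hd', mul_comm, h.branchPotential_child hd hz (Finset.mem_filter.1 hw).2 hwp]
  rw [← Finset.add_sum_erase _ _ hmem, h.branchPotential_parent hd hz, Finset.sum_congr rfl hchild,
    Finset.sum_const, Finset.card_erase_of_mem hmem, hreg.card_filter_adj, nsmul_eq_mul,
    Nat.cast_pred (zero_lt_one.trans hd), mul_div_cancel₀ _ hd']
  ring

lemma sum_branchPotential_adj_parent_root (h : IsBranch G x s S depth parent) :
    ∑ y with G.Adj (parent x) y, branchPotential d S depth y = d / (d - 1) := by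
  rw [← h.branchPotential_root]
  refine Finset.sum_eq_single x (fun y hy hyx => indicator_of_notMem (fun hyS => hyx ?_) _)
    fun hx => (hx ?_).elim
  · exact h.eq_root_of_adj hyS (Finset.mem_filter.1 hy).2.symm
  · exact Finset.mem_filter.2 ⟨Finset.mem_univ x, (h.adj_parent h.root_mem).symm⟩

lemma sum_branchPotential_adj_of_notMem (h : IsBranch G x s S depth parent) (hz : z ∉ S)
    (hzx : z ≠ parent x) :
    ∑ y with G.Adj z y, branchPotential d S depth y =
      ∑ y with G.Adj z y, leafPotential d s S depth y := by
  refine Finset.sum_congr rfl fun y hy => ?_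
  have hyz : G.Adj y z := (Finset.mem_filter.1 hy).2.symm
  by_cases hyS : y ∈ S
  · have hzy : z ≠ parent y := by
      rintro rfl
      by_cases hyx : y = x
      · exact hzx (hyx ▸ rfl)
      · exact hz (h.parent_mem hyS hyx)
    have hleaf : depth y + 1 = s := (Nat.succ_le_of_lt (h.depth_lt hyS)).eq_of_not_lt
      fun hlt => hz (h.child_mem hyS hyz hzy hlt)
    rw [leafPotential, indicator_of_mem (show y ∈ {z | depth z + 1 = s} from hleaf)]
  · have hφ : branchPotential d S depth y = 0 := indicator_of_notMem hyS _
    rw [hφ, leafPotential, indicator_apply_eq_zero.2 fun _ => hφ]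

-- On an infinite tree the error would vanish; truncating after `s` generations leaves only the
-- contribution of the last generation and of its neighbours.
lemma abs_laplacian_branchPotential_sub_le (h : IsBranch G x s S depth parent) (hd : 1 < d)
    (hreg : IsReg G d) (z : V) :
    |(laplacian G d *ᵥ branchPotential d S depth) z -
        (Pi.single x 1 - ((d : ℝ) - 1)⁻¹ • Pi.single (parent x) 1 : V → ℝ) z| ≤
      leafPotential d s S depth z + (transP G d *ᵥ leafPotential d s S depth) z := by
  have hd0 : (d : ℝ) ≠ 0 := Nat.cast_ne_zero.2 (by lia)
  have hk : 0 ≤ leafPotential d s S depth z := leafPotential_nonneg hd z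
  have hPk : 0 ≤ (transP G d *ᵥ leafPotential d s S depth) z := by
    rw [transP_mulVec_apply]
    exact mul_nonneg (by positivity) (Finset.sum_nonneg fun y _ => leafPotential_nonneg hd y)
  simp only [Pi.sub_apply, Pi.smul_apply, smul_eq_mul, laplacian_mulVec_apply]
  by_cases hz : z ∈ S
  · have hzp : z ≠ parent x := fun hzp => h.parent_root_notMem (hzp ▸ hz)
    have hle : (d : ℝ)⁻¹ * leafPotential d s S depth z ≤ leafPotential d s S depth z :=
      mul_le_of_le_one_left hk (inv_le_one_of_one_le₀ (by exact_mod_cast hd.le))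
    rw [h.sum_branchPotential_adj hd hreg hz, Pi.single_eq_of_ne (M := fun _ => ℝ) hzp]
    calc _ = |(d : ℝ)⁻¹ * leafPotential d s S depth z| := by
          congr 1
          field_simp
          ring
      _ ≤ _ := by rw [abs_of_nonneg (by positivity)]; linarith
  · have hzx : z ≠ x := fun hzx => hz (hzx ▸ h.root_mem)
    have hφ : branchPotential d S depth z = 0 := indicator_of_notMem hz _
    rw [hφ, Pi.single_eq_of_ne (M := fun _ => ℝ) hzx]
    by_cases hzp : z = parent x
    · subst hzp
      rw [h.sum_branchPotential_adj_parent_root, Pi.single_eq_same, ← div_eq_inv_mul,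
        div_right_comm, div_self hd0]
      simpa using add_nonneg hk hPk
    · rw [h.sum_branchPotential_adj_of_notMem hz hzp, ← transP_mulVec_apply,
        Pi.single_eq_of_ne (M := fun _ => ℝ) hzp, mul_zero, sub_zero, sub_zero, zero_sub, abs_neg,
        abs_of_nonneg hPk]
      exact le_add_of_nonneg_left hk

lemma card_generation_succ_le (h : IsBranch G x s S depth parent) (hreg : IsReg G d) (j : ℕ) :
    (generation S depth (j + 1)).card ≤ (d - 1) * (generation S depth j).card := by
  have hne : ∀ z ∈ generation S depth (j + 1), z ≠ x := by
    rintro z hz rfl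
    have := (mem_generation.1 hz).2
    rw [h.depth_root] at this
    lia
  refine Finset.card_le_mul_card_image_of_maps_to (f := parent) (fun z hz => ?_) _ fun p hp => ?_
  · obtain ⟨hzS, hzj⟩ := mem_generation.1 hz
    have := h.depth_parent hzS (hne z hz)
    exact mem_generation.2 ⟨h.parent_mem hzS (hne z hz), by lia⟩
  · obtain ⟨hpS, hpj⟩ := mem_generation.1 hp
    have hmem : parent p ∈ Finset.univ.filter (G.Adj p) := by simpa using h.adj_parent hpS
    rw [← hreg.card_filter_adj p, ← Finset.card_erase_of_mem hmem]
    refine Finset.card_le_card fun z hz => ?_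
    obtain ⟨hzj, rfl⟩ := Finset.mem_filter.1 hz
    obtain ⟨hzS, hzj⟩ := mem_generation.1 hzj
    refine Finset.mem_erase.2 ⟨fun hzp => ?_, by simpa using (h.adj_parent hzS).symm⟩
    by_cases hpx : parent z = x
    · exact h.parent_root_notMem (by rwa [← hpx, ← hzp])
    · have := h.depth_parent hpS hpx
      rw [← hzp] at this
      lia

lemma card_generation_le (h : IsBranch G x s S depth parent) (hreg : IsReg G d) (j : ℕ) :
    (generation S depth j).card ≤ (d - 1) ^ j := by
  induction j with
  | zero =>
    refine (Finset.card_le_card (t := {x}) fun z hz => ?_).trans_eq (Finset.card_singleton x)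
    obtain ⟨hzS, hz0⟩ := mem_generation.1 hz
    by_contra hzx
    exact Nat.succ_ne_zero _ ((h.depth_parent hzS (by simpa using hzx)).trans hz0)
  | succ j ih =>
    calc _ ≤ (d - 1) * (generation S depth j).card := h.card_generation_succ_le hreg j
      _ ≤ (d - 1) * (d - 1) ^ j := by gcongr
      _ = (d - 1) ^ (j + 1) := (pow_succ' _ _).symm

lemma sum_generation_branchPotential_le (h : IsBranch G x s S depth parent) (hd : 1 < d)
    (hreg : IsReg G d) (j : ℕ) :
    ∑ z ∈ generation S depth j, branchPotential d S depth z ≤ d / (d - 1) := by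
  have hd' := cast_sub_one_pos hd
  have hcard : ((generation S depth j).card : ℝ) ≤ ((d : ℝ) - 1) ^ j := by
    have := Nat.cast_le (α := ℝ).2 (h.card_generation_le hreg j)
    rwa [Nat.cast_pow, Nat.cast_pred (zero_lt_one.trans hd)] at this
  calc ∑ z ∈ generation S depth j, branchPotential d S depth z
      = (generation S depth j).card * (d / (d - 1) * ((d : ℝ) - 1)⁻¹ ^ j) := by
        rw [Finset.sum_congr rfl fun z hz => branchPotential_of_mem_generation hz,
          Finset.sum_const, nsmul_eq_mul]
    _ ≤ ((d : ℝ) - 1) ^ j * (d / (d - 1) * ((d : ℝ) - 1)⁻¹ ^ j) := by gcongr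
    _ = d / (d - 1) := by
        rw [inv_pow]
        field_simp

lemma sum_branchPotential_le (h : IsBranch G x s S depth parent) (hd : 1 < d) (hreg : IsReg G d) :
    ∑ z, branchPotential d S depth z ≤ s * (d / (d - 1)) :=
  calc ∑ z, branchPotential d S depth z = ∑ z with z ∈ S, branchPotential d S depth z := by
        refine (Finset.sum_filter_of_ne fun z _ hz => ?_).symm
        exact mem_of_indicator_ne_zero hz
    _ = ∑ j ∈ Finset.range s, ∑ z ∈ generation S depth j, branchPotential d S depth z := by
        rw [← Finset.sum_fiberwise_of_maps_to (g := depth) (t := Finset.range s) fun z hz =>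
          Finset.mem_range.2 (h.depth_lt (Finset.mem_filter.1 hz).2)]
        simp only [Finset.filter_filter, generation]
    _ ≤ ∑ j ∈ Finset.range s, (d / (d - 1) : ℝ) :=
        Finset.sum_le_sum fun j _ => h.sum_generation_branchPotential_le hd hreg j
    _ = s * (d / (d - 1)) := by rw [Finset.sum_const, Finset.card_range, nsmul_eq_mul]

lemma leafPotential_dotProduct_self_le (h : IsBranch G x s S depth parent) (hd : 1 < d)
    (hreg : IsReg G d) :
    leafPotential d s S depth ⬝ᵥ leafPotential d s S depth ≤
      ((d : ℝ) / (d - 1)) ^ 2 * ((d : ℝ) - 1)⁻¹ ^ (s - 1) := by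
  have hd' := cast_sub_one_pos hd
  have hs : 0 < s := (Nat.zero_le _).trans_lt (h.depth_lt h.root_mem)
  have hsupp : Function.support (leafPotential d s S depth) ⊆ generation S depth (s - 1) := by
    intro z hz
    have hleaf : z ∈ {z | depth z + 1 = s} := mem_of_indicator_ne_zero hz
    rw [Function.mem_support, leafPotential, indicator_of_mem hleaf] at hz
    exact mem_generation.2 ⟨mem_of_indicator_ne_zero hz, Nat.eq_sub_of_add_eq hleaf⟩
  calc leafPotential d s S depth ⬝ᵥ leafPotential d s S depth
      = ∑ z ∈ generation S depth (s - 1), d / (d - 1) * ((d : ℝ) - 1)⁻¹ ^ (s - 1) *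
          branchPotential d S depth z := by
        rw [dotProduct_eq_sum_of_support_subset hsupp, Finset.toFinset_coe]
        refine Finset.sum_congr rfl fun z hz => ?_
        have hleaf : z ∈ {z | depth z + 1 = s} := by
          rw [Set.mem_ofPred_eq, (mem_generation.1 hz).2, Nat.sub_add_cancel hs]
        rw [leafPotential, indicator_of_mem hleaf, branchPotential_of_mem_generation hz]
    _ ≤ d / (d - 1) * ((d : ℝ) - 1)⁻¹ ^ (s - 1) * (d / (d - 1)) := by
        rw [← Finset.mul_sum]
        gcongr
        exact h.sum_generation_branchPotential_le hd hreg _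
    _ = _ := by ring

lemma exists_laplacian_branchPotential_eq (h : IsBranch G x s S depth parent) (hd : 1 < d)
    (hreg : IsReg G d) :
    ∃ e : V → ℝ, laplacian G d *ᵥ branchPotential d S depth =
        Pi.single x 1 - ((d : ℝ) - 1)⁻¹ • Pi.single (parent x) 1 + e ∧
      e ⬝ᵥ e ≤ 4 * (((d : ℝ) / (d - 1)) ^ 2 * ((d : ℝ) - 1)⁻¹ ^ (s - 1)) := by
  set k := leafPotential d s S depth
  refine ⟨laplacian G d *ᵥ branchPotential d S depth -
    (Pi.single x 1 - ((d : ℝ) - 1)⁻¹ • Pi.single (parent x) 1), (add_sub_cancel _ _).symm, ?_⟩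
  set e : V → ℝ := laplacian G d *ᵥ branchPotential d S depth -
    (Pi.single x 1 - ((d : ℝ) - 1)⁻¹ • Pi.single (parent x) 1)
  have hpt (z : V) : e z * e z ≤ 2 * (k z * k z + (transP G d *ᵥ k) z * (transP G d *ᵥ k) z) := by
    have hle : |e z| ≤ k z + (transP G d *ᵥ k) z :=
      h.abs_laplacian_branchPotential_sub_le hd hreg z
    simpa only [← sq] using (sq_le_sq' (neg_le_of_abs_le hle) (le_of_abs_le hle)).trans add_sq_le
  calc e ⬝ᵥ e ≤ 2 * (k ⬝ᵥ k + (transP G d *ᵥ k) ⬝ᵥ (transP G d *ᵥ k)) := by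
        simp only [dotProduct, ← Finset.sum_add_distrib, Finset.mul_sum]
        exact Finset.sum_le_sum fun z _ => hpt z
    _ ≤ 2 * (k ⬝ᵥ k + k ⬝ᵥ k) := by
        gcongr
        exact transP_mulVec_dotProduct_self_le (by lia) hreg k
    _ = 4 * (k ⬝ᵥ k) := by ring
    _ ≤ _ := by
        gcongr
        exact h.leafPotential_dotProduct_self_le hd hreg

end IsBranch

end Branch

section RootedTree

variable {V : Type*} {H : SimpleGraph V} {r z p w : V}

lemma exists_adj_dist_add_one_eq (hH : H.Connected) (hz : z ≠ r) :
    ∃ p, H.Adj z p ∧ H.dist r p + 1 = H.dist r z := by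
  obtain ⟨q, hq⟩ := hH.exists_walk_length_eq_dist r z
  have hadj := q.adj_penultimate fun h => hz h.eq.symm
  have hlen : q.dropLast.length + 1 = q.length := by
    rw [← SimpleGraph.Walk.length_concat _ hadj, SimpleGraph.Walk.concat_dropLast]
  have hle : H.dist r q.penultimate ≤ q.dropLast.length := SimpleGraph.dist_le _
  have htri : H.dist r z ≤ H.dist r q.penultimate + H.dist q.penultimate z := hH.dist_triangle
  rw [SimpleGraph.dist_eq_one_iff_adj.2 hadj] at htri
  exact ⟨q.penultimate, hadj.symm, by lia⟩

lemma eq_of_isTree_of_dist_add_one_eq (hH : H.IsTree) (hp : H.Adj p z) (hw : H.Adj w z)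
    (hdp : H.dist r p + 1 = H.dist r z) (hdw : H.dist r w + 1 = H.dist r z) : p = w := by
  obtain ⟨q, hq⟩ := hH.connected.exists_walk_length_eq_dist r p
  obtain ⟨q', hq'⟩ := hH.connected.exists_walk_length_eq_dist r w
  have hpath := (q.concat hp).isPath_of_length_eq_dist (by rw [q.length_concat, hq, hdp])
  have hpath' := (q'.concat hw).isPath_of_length_eq_dist (by rw [q'.length_concat, hq', hdw])
  have heq := congrArg Subtype.val
    ((hH.isAcyclic.subsingleton_path r z).elim ⟨_, hpath⟩ ⟨_, hpath'⟩)
  simpa only [SimpleGraph.Walk.penultimate_concat] using congrArg SimpleGraph.Walk.penultimate heq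

end RootedTree

section GoodVertex

variable {V : Type*} {G : SimpleGraph V} {A F : Set V} {s : ℕ} {x xbar z w : V}

lemma adjPairs_eq_two_mul_ncard_edgeSet [Finite V] (G : SimpleGraph V) (F : Set V) :
    adjPairs G F = 2 * (G.induce F).edgeSet.ncard := by
  have := Fintype.ofFinite V
  rw [Set.ncard_eq_toFinset_card', ← SimpleGraph.edgeFinset,
    ← SimpleGraph.dart_card_eq_twice_card_edges, ← Nat.card_eq_fintype_card, adjPairs,
    ← Nat.card_coe_set_eq]
  exact Nat.card_congr
    { toFun := fun p => ⟨(⟨p.1.1, p.2.1⟩, ⟨p.1.2, p.2.2.1⟩), p.2.2.2⟩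
      invFun := fun e => ⟨(e.fst, e.snd), e.fst.2, e.snd.2, e.adj⟩
      left_inv := fun _ => rfl
      right_inv := fun _ => rfl }

lemma TxZero.isTree_induce [Finite V] (htx : TxZero G F) (hF : (G.induce F).Connected) :
    (G.induce F).IsTree := by
  have hpos : 0 < F.ncard := (Set.ncard_pos F.toFinite).2 (nonempty_coe_sort.1 hF.nonempty)
  rw [TxZero, adjPairs_eq_two_mul_ncard_edgeSet] at htx
  rw [SimpleGraph.isTree_iff_connected_and_card, Nat.card_coe_set_eq, Nat.card_coe_set_eq]
  exact ⟨hF, by lia⟩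

lemma exists_parent_of_isTree_induce (hF : (G.induce F).IsTree) {r : F} {depth : V → ℕ}
    (hdepth : ∀ z : F, depth z = (G.induce F).dist r z) {z : F} (hz : z ≠ r) :
    ∃ p ∈ F, G.Adj z p ∧ depth p + 1 = depth z ∧
      ∀ w ∈ F, G.Adj z w → w ≠ p → depth w = depth z + 1 := by
  obtain ⟨p, hadj, hdist⟩ := exists_adj_dist_add_one_eq hF.connected hz
  refine ⟨p, p.2, hadj, by rw [hdepth, hdepth, hdist], fun w hw hzw hwp => ?_⟩
  rw [hdepth ⟨w, hw⟩, hdepth]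
  have hzw' : (G.induce F).Adj z ⟨w, hw⟩ := hzw
  refine (hF.dist_eq_dist_add_one_of_adj r hzw').resolve_left fun h => hwp ?_
  exact congrArg Subtype.val
    (eq_of_isTree_of_dist_add_one_eq hF hzw'.symm hadj.symm h.symm hdist)

lemma exists_depth_parent_of_isTree_induce (hF : (G.induce F).IsTree) (hx : x ∈ F)
    (hadj : G.Adj x xbar) :
    ∃ depth : V → ℕ, (∀ z : F, depth z = (G.induce F).dist ⟨x, hx⟩ z) ∧
      ∃ parent : V → V, parent x = xbar ∧ (∀ z ∈ F, G.Adj z (parent z)) ∧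
        (∀ z ∈ F, z ≠ x → parent z ∈ F ∧ depth (parent z) + 1 = depth z) ∧
        ∀ z ∈ F, ∀ w ∈ F, G.Adj z w → w ≠ parent z → depth w = depth z + 1 := by
  obtain ⟨depth, hdepth⟩ : ∃ depth : V → ℕ, ∀ z : F, depth z = (G.induce F).dist ⟨x, hx⟩ z :=
    ⟨_, Subtype.val_injective.extend_apply _ fun _ => 0⟩
  have hp (z : V) (hz : z ∈ F) (hzx : z ≠ x) := exists_parent_of_isTree_induce hF hdepth
    (z := ⟨z, hz⟩) fun h => hzx (congrArg Subtype.val h)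
  choose! p hpF hadjp hdepthp hdepthc using hp
  have hpx : Function.update p x xbar x = xbar := Function.update_self ..
  have hpz {z : V} (hzx : z ≠ x) : Function.update p x xbar z = p z := Function.update_of_ne hzx ..
  refine ⟨depth, hdepth, Function.update p x xbar, hpx, fun z hz => ?_, fun z hz hzx => ?_,
    fun z hz w hw hzw hwp => ?_⟩
  · rcases eq_or_ne z x with rfl | hzx
    · rwa [hpx]
    · rw [hpz hzx]
      exact hadjp z hz hzx
  · rw [hpz hzx]
    exact ⟨hpF z hz hzx, hdepthp z hz hzx⟩
  · rcases eq_or_ne z x with rfl | hzx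
    · rw [hdepth ⟨w, hw⟩, hdepth ⟨z, hz⟩, SimpleGraph.dist_self, zero_add,
        SimpleGraph.dist_eq_one_iff_adj]
      exact hzw
    · exact hdepthc z hz hzx w hw hzw (hpz hzx ▸ hwp)

lemma exists_isBranch_of_isTree_induce (hF : (G.induce F).IsTree) (hx : x ∈ F)
    (hadj : G.Adj x xbar) (hxbar : xbar ∉ F) (hroot : ∀ z ∈ F, G.Adj z xbar → z = x)
    (hs : 0 < s) (hclosed : ∀ z : F, (G.induce F).dist ⟨x, hx⟩ z + 1 < s →
      ∀ w, G.Adj z w → w ≠ xbar → w ∈ F) :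
    ∃ S ⊆ F, ∃ depth parent, IsBranch G x s S depth parent ∧ parent x = xbar := by
  obtain ⟨depth, hdepth, parent, hparentx, hadjp, hparent, hchild⟩ :=
    exists_depth_parent_of_isTree_induce hF hx hadj
  have hdepthx : depth x = 0 := (hdepth ⟨x, hx⟩).trans SimpleGraph.dist_self
  refine ⟨{z | z ∈ F ∧ depth z < s}, fun z hz => hz.1, depth, parent, ?_, hparentx⟩
  constructor
  case root_mem => exact ⟨hx, by rwa [hdepthx]⟩
  case depth_root => exact hdepthx
  case depth_lt => exact And.right
  case adj_parent => exact fun hz => hadjp _ hz.1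
  case parent_root_notMem => exact fun h => hxbar (hparentx ▸ h.1)
  case parent_mem =>
    rintro z ⟨hz, hzs⟩ hzx
    obtain ⟨hpF, hdepthp⟩ := hparent z hz hzx
    exact ⟨hpF, ((Nat.lt_succ_self _).trans_eq hdepthp).trans hzs⟩
  case depth_parent => exact fun hz hzx => (hparent _ hz.1 hzx).2
  case depth_child => exact fun hz hw => hchild _ hz.1 _ hw.1
  case child_mem =>
    rintro z w ⟨hz, -⟩ hzw hwp hlt
    have hwxbar : w ≠ xbar := by
      rintro rfl
      obtain rfl := hroot z hz hzw
      exact hwp hparentx.symm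
    have hw : w ∈ F := hclosed ⟨z, hz⟩ (by rwa [← hdepth]) w hzw hwxbar
    exact ⟨hw, (hchild z hz w hw hzw hwp).trans_lt hlt⟩
  case eq_root_of_adj => exact fun hz h => hroot _ hz.1 (hparentx ▸ h)

lemma mem_sball_and_notMem_of_mem_Fset (hz : z ∈ Fset G A s x) : z ∈ sball G A s ∧ z ∉ A :=
  hz.elim fun p hp => hp z p.end_mem_support

lemma self_mem_Fset (hx : x ∈ sball G A s) (hxA : x ∉ A) : x ∈ Fset G A s x :=
  ⟨SimpleGraph.Walk.nil, by simp [hx, hxA]⟩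

lemma mem_Fset_of_adj (hz : z ∈ Fset G A s x) (hzw : G.Adj z w) (hw : w ∈ sball G A s)
    (hwA : w ∉ A) : w ∈ Fset G A s x := by
  obtain ⟨p, hp⟩ := hz
  refine ⟨p.concat hzw, fun v hv => ?_⟩
  rw [SimpleGraph.Walk.support_concat, List.mem_append, List.mem_singleton] at hv
  rcases hv with hv | rfl
  exacts [hp v hv, ⟨hw, hwA⟩]

lemma connected_induce_Fset (hx : x ∈ Fset G A s x) : (G.induce (Fset G A s x)).Connected := by
  refine SimpleGraph.connected_iff_exists_forall_reachable _ |>.2 ⟨⟨x, hx⟩, ?_⟩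
  rintro ⟨z, p, hp⟩
  have hsupp : ∀ v ∈ p.support, v ∈ Fset G A s x := fun v hv =>
    ⟨p.takeUntil v hv, fun w hw => hp w (p.support_takeUntil_subset_support hv hw)⟩
  exact ⟨p.induce _ hsupp⟩

namespace GoodVertex

lemma eq_of_mem_Fset_of_adj (hgood : GoodVertex G A s x) (hz : z ∈ Fset G A s x) (hw : w ∈ A)
    (hzw : G.Adj z w) : z = x := by
  obtain ⟨-, -, -, hsep⟩ := hgood
  by_contra hzx
  obtain ⟨p, hp⟩ := hz
  have hp' : ∀ v ∈ p.reverse.support, v ∈ sball G A s ∧ v ∉ A := fun v hv =>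
    hp v (by rwa [p.support_reverse, List.mem_reverse] at hv)
  obtain ⟨v, hv, hvs⟩ := hsep z (hp z p.end_mem_support).2 ⟨w, hw, hzw⟩ hzx p.reverse
    fun v hv => (hp' v hv).2
  exact hvs (hp' v hv).1

lemma mem_Fset_of_dist_add_one_lt (hgood : GoodVertex G A s x) (hxbar : xbar ∈ A)
    (hadj : G.Adj x xbar) (hx : x ∈ Fset G A s x) {z : Fset G A s x}
    (hz : (G.induce (Fset G A s x)).dist ⟨x, hx⟩ z + 1 < s) (hzw : G.Adj z w) (hw : w ≠ xbar) :
    w ∈ Fset G A s x := by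
  refine mem_Fset_of_adj z.2 hzw ⟨xbar, hxbar, ?_⟩ fun hwA => hw ?_
  · obtain ⟨p, hp⟩ := (connected_induce_Fset hx).exists_walk_length_eq_dist ⟨x, hx⟩ z
    let p' : G.Walk x z := p.map (SimpleGraph.Embedding.induce _).toHom
    calc G.dist xbar w ≤ (SimpleGraph.Walk.cons hadj.symm (p'.concat hzw)).length :=
          SimpleGraph.dist_le _
      _ = p.length + 1 + 1 := by
          rw [SimpleGraph.Walk.length_cons, SimpleGraph.Walk.length_concat,
            show p'.length = p.length from SimpleGraph.Walk.length_map ..]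
      _ ≤ s := by lia
  · have hzx := hgood.eq_of_mem_Fset_of_adj z.2 hwA hzw
    exact hgood.2.1.unique ⟨hwA, hzx ▸ hzw⟩ ⟨hxbar, hadj⟩

lemma exists_isBranch [Finite V] (hgood : GoodVertex G A s x) (hs : 0 < s) (hxbar : xbar ∈ A)
    (hadj : G.Adj x xbar) :
    ∃ S, Disjoint S A ∧ ∃ depth parent, IsBranch G x s S depth parent ∧ parent x = xbar := by
  have hx : x ∈ Fset G A s x := self_mem_Fset
    ⟨xbar, hxbar, (SimpleGraph.dist_eq_one_iff_adj.2 hadj.symm).trans_le hs⟩ hgood.1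
  obtain ⟨S, hSF, hS⟩ := exists_isBranch_of_isTree_induce
    (hgood.2.2.1.isTree_induce (connected_induce_Fset hx)) hx hadj
    (fun h => (mem_sball_and_notMem_of_mem_Fset h).2 hxbar)
    (fun z hz => hgood.eq_of_mem_Fset_of_adj hz hxbar) hs
    fun z hz w => hgood.mem_Fset_of_dist_add_one_lt hxbar hadj hx hz
  exact ⟨S, disjoint_left.2 fun z hz => (mem_sball_and_notMem_of_mem_Fset (hSF hz)).2, hS⟩

end GoodVertex

end GoodVertex

/-! ### Asymptotics of the error -/

section Asymptotics

variable {d : ℕ}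

lemma tendsto_log_natCast_atTop : Tendsto (fun N : ℕ => Real.log N) atTop atTop :=
  Real.tendsto_log_atTop.comp tendsto_natCast_atTop_atTop

lemma log_natCast_pow_isLittleO (k : ℕ) :
    (fun N : ℕ => Real.log N ^ k) =o[atTop] fun N => (N : ℝ) :=
  Real.isLittleO_pow_log_id_atTop.comp_tendsto tendsto_natCast_atTop_atTop

lemma exists_pos_le_one_sub_div (b : ℝ) :
    ∃ γ > 0, ∀ N a : ℕ, a < N → (a : ℝ) ≤ b * Real.log N → γ ≤ (1 - (a : ℝ) / N) / 2 := by
  have hsmall : ∀ᶠ N : ℕ in atTop, |b * Real.log N| ≤ 1 / 2 * N := by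
    simpa using ((log_natCast_pow_isLittleO 1).const_mul_left b).bound (half_pos one_pos)
  obtain ⟨M, hM⟩ := eventually_atTop.1 hsmall
  refine ⟨min (1 / 4) (1 / (2 * (M + 1))), by positivity, fun N a haN hab => ?_⟩
  have hN : (0 : ℝ) < N := Nat.cast_pos.2 (Nat.zero_lt_of_lt haN)
  rcases le_total M N with hMN | hNM
  · refine (min_le_left _ _).trans ?_
    have : (a : ℝ) / N ≤ 1 / 2 := by
      rw [div_le_iff₀ hN]
      exact hab.trans ((le_abs_self _).trans (hM N hMN))
    linarith
  · refine (min_le_right _ _).trans ?_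
    have haN' : (a : ℝ) + 1 ≤ N := by exact_mod_cast haN
    calc (1 : ℝ) / (2 * (M + 1)) ≤ 1 / (2 * N) := by
          gcongr
          exact (Nat.cast_le.2 hNM).trans (le_add_of_nonneg_right zero_le_one)
      _ = 1 / N / 2 := by ring
      _ ≤ (N - a) / N / 2 := by gcongr; linarith
      _ = (1 - a / N) / 2 := by rw [sub_div, div_self hN.ne']

lemma one_lt_cast_sub_one (hd : 2 < d) : (1 : ℝ) < d - 1 := by
  have : (2 : ℝ) < d := by exact_mod_cast hd
  linarith

lemma one_isBigO_log_natCast : (fun _ : ℕ => (1 : ℝ)) =O[atTop] fun N => Real.log N :=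
  ((isLittleO_const_left (c := (1 : ℝ))).2
    (Or.inr (tendsto_norm_atTop_atTop.comp tendsto_log_natCast_atTop))).isBigO

lemma one_le_sn (d N : ℕ) : 1 ≤ sn d N := le_max_left _ _

lemma isBigO_sn (hd : 2 < d) : (fun N => (sn d N : ℝ)) =O[atTop] fun N => Real.log N := by
  have hlogb : Tendsto (fun N : ℕ => Real.logb (d - 1) N) atTop atTop :=
    tendsto_log_natCast_atTop.atTop_div_const (Real.log_pos (one_lt_cast_sub_one hd))
  have hlogb' : (fun N : ℕ => Real.logb (d - 1) (Real.logb (d - 1) N)) =O[atTop]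
      fun N => Real.log N :=
    calc (fun N : ℕ => Real.logb (d - 1) (Real.logb (d - 1) N))
        =O[atTop] fun N : ℕ => Real.logb (d - 1) N :=
          ((Real.isLittleO_log_id_atTop.comp_tendsto hlogb).isBigO.const_mul_left
            (Real.log (d - 1))⁻¹).congr_left fun N => (div_eq_inv_mul _ _).symm
      _ =O[atTop] fun N : ℕ => Real.log N :=
          ((isBigO_refl _ _).const_mul_left (Real.log (d - 1))⁻¹).congr_left
            fun N => (div_eq_inv_mul _ _).symm
  refine IsBigO.trans (IsBigO.of_bound' (Eventually.of_forall fun N => ?_))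
    (one_isBigO_log_natCast.add (hlogb'.norm_left.const_mul_left 8))
  rw [Real.norm_natCast, Real.norm_of_nonneg (by positivity), sn, Nat.cast_max, Nat.cast_one]
  refine max_le (le_add_of_nonneg_right (by positivity)) ?_
  calc (⌊8 * Real.logb ((d : ℝ) - 1) (Real.logb (d - 1) N)⌋₊ : ℝ)
      ≤ ⌊8 * ‖Real.logb ((d : ℝ) - 1) (Real.logb (d - 1) N)‖⌋₊ := by
        gcongr
        exact le_abs_self _
    _ ≤ 8 * ‖Real.logb ((d : ℝ) - 1) (Real.logb (d - 1) N)‖ := Nat.floor_le (by positivity)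
    _ ≤ _ := le_add_of_nonneg_left zero_le_one

lemma isBigO_inv_pow_sn (hd : 2 < d) :
    (fun N => ((d : ℝ) - 1)⁻¹ ^ (sn d N - 1)) =O[atTop] fun N => (Real.log N ^ 8)⁻¹ := by
  have hD := one_lt_cast_sub_one hd
  have hlogD : 0 < Real.log ((d : ℝ) - 1) := Real.log_pos hD
  refine IsBigO.of_bound (((d : ℝ) - 1) ^ 2 * Real.log ((d : ℝ) - 1) ^ 8) ?_
  filter_upwards [tendsto_log_natCast_atTop.eventually_gt_atTop 0] with N hN
  have hfloor : 8 * Real.logb (d - 1) (Real.logb (d - 1) N) ≤ ((sn d N - 1 : ℕ) : ℝ) + 2 := by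
    have h₁ := Nat.lt_floor_add_one (8 * Real.logb ((d : ℝ) - 1) (Real.logb (d - 1) N))
    have h₂ : (⌊8 * Real.logb ((d : ℝ) - 1) (Real.logb (d - 1) N)⌋₊ : ℝ) ≤ sn d N :=
      Nat.cast_le.2 (le_max_right 1 _)
    rw [Nat.cast_sub (one_le_sn d N)]
    push_cast
    linarith
  have hlogb : 0 < Real.logb ((d : ℝ) - 1) N := div_pos hN hlogD
  have hpow : Real.logb ((d : ℝ) - 1) N ^ 8 ≤ ((d : ℝ) - 1) ^ (sn d N - 1) * (d - 1) ^ 2 :=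
    calc Real.logb ((d : ℝ) - 1) N ^ 8
        = ((d : ℝ) - 1) ^ (8 * Real.logb (d - 1) (Real.logb (d - 1) N)) := by
          rw [mul_comm, Real.rpow_mul (by linarith),
            Real.rpow_logb (by linarith) hD.ne' hlogb]
          norm_cast
      _ ≤ ((d : ℝ) - 1) ^ (((sn d N - 1 : ℕ) : ℝ) + 2) :=
          Real.rpow_le_rpow_of_exponent_le hD.le hfloor
      _ = ((d : ℝ) - 1) ^ (sn d N - 1) * (d - 1) ^ 2 := by
          rw [Real.rpow_add (by linarith)]
          norm_cast
  rw [Real.norm_of_nonneg (by positivity), Real.norm_of_nonneg (by positivity), inv_pow,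
    ← div_eq_mul_inv, le_div_iff₀ (by positivity), inv_mul_le_iff₀ (by positivity)]
  rw [Real.logb, div_pow, div_le_iff₀ (by positivity)] at hpow
  linarith

/-- The bound on `∑ y ∈ insert x A, ((K w) y - φ y) ^ 2` for `w = δ_x - δ_x̄ / (d - 1)`, `K` the
Green function on `N` vertices, `φ` the branch potential of depth `s` and `|A| ≤ a`: the first
summand comes from the mean of `φ`, the second one from cutting the branch at depth `s`. -/
noncomputable def branchError (d s : ℕ) (β a : ℝ) (N : ℕ) : ℝ :=
  2 * ((a + 1) * (s * (d / (d - 1)) / N) ^ 2 +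
    β⁻¹ ^ 2 * (4 * ((d / (d - 1)) ^ 2 * ((d : ℝ) - 1)⁻¹ ^ (s - 1))))

lemma isBigO_sn_div (hd : 2 < d) :
    (fun N : ℕ => (sn d N : ℝ) / N) =O[atTop] fun N => (Real.log N ^ 5)⁻¹ := by
  have hpos : ∀ᶠ N : ℕ in atTop, 0 < (N : ℝ) ∧ 0 < Real.log N :=
    (tendsto_natCast_atTop_atTop.eventually_gt_atTop 0).and
      (tendsto_log_natCast_atTop.eventually_gt_atTop 0)
  refine ((isBigO_sn hd).mul (isBigO_refl (fun N : ℕ => (N : ℝ)⁻¹) atTop)).trans ?_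
  refine ((log_natCast_pow_isLittleO 6).isBigO.mul
    (isBigO_refl (fun N : ℕ => (N : ℝ)⁻¹ * (Real.log N ^ 5)⁻¹) atTop)).congr' ?_ ?_
  · filter_upwards [hpos] with N ⟨hN, hlog⟩
    field_simp
  · filter_upwards [hpos] with N ⟨hN, hlog⟩
    field_simp

lemma isBigO_branchError (hd : 2 < d) (β b : ℝ) :
    (fun N => branchError d (sn d N) β (b * Real.log N) N) =O[atTop]
      fun N => (Real.log N ^ 8)⁻¹ := by
  have hcount : (fun N : ℕ => b * Real.log N + 1) =O[atTop] fun N => Real.log N :=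
    ((isBigO_refl _ _).const_mul_left b).add one_isBigO_log_natCast
  have hmean : (fun N : ℕ => (b * Real.log N + 1) * (sn d N * ((d : ℝ) / (d - 1)) / N) ^ 2)
      =O[atTop] fun N => (Real.log N ^ 8)⁻¹ := by
    have hsq := ((isBigO_sn_div hd).const_mul_left ((d : ℝ) / (d - 1))).pow 2
    refine ((hcount.mul hsq).congr_left fun N => ?_).trans (IsBigO.of_bound' ?_)
    · rw [mul_div_right_comm, mul_comm ((d : ℝ) / (d - 1))]
    · filter_upwards [tendsto_log_natCast_atTop.eventually_ge_atTop 1] with N hN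
      have hN0 : Real.log N ≠ 0 := (zero_lt_one.trans_le hN).ne'
      have heq : Real.log N * ((Real.log N ^ 5)⁻¹) ^ 2 = (Real.log N ^ 9)⁻¹ := by field_simp
      rw [heq, Real.norm_of_nonneg (by positivity), Real.norm_of_nonneg (by positivity)]
      gcongr
      norm_num
  exact (hmean.add (((isBigO_inv_pow_sn hd).const_mul_left _).const_mul_left _
    |>.const_mul_left _)).const_mul_left _

lemma exists_branchError_le (hd : 2 < d) (β b : ℝ) :
    ∃ C > 0, ∀ N : ℕ, 0 < Real.log N →
      branchError d (sn d N) β (b * Real.log N) N ≤ C / Real.log N ^ 8 := by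
  obtain ⟨C, hC, h⟩ := bound_of_isBigO_nat_atTop (isBigO_branchError hd β b)
  refine ⟨C, hC, fun N hN => ?_⟩
  have := h (x := N) (by positivity)
  rw [Real.norm_of_nonneg (by positivity : 0 ≤ (Real.log N ^ 8)⁻¹)] at this
  exact (le_abs_self _).trans this

end Asymptotics

/-! ### Conditional laws of Gaussian fields -/

section ConditionalLaw

variable {Ω : Type*} {m mΩ : MeasurableSpace Ω} {μ : Measure Ω} [IsProbabilityMeasure μ]
  {X Y : Ω → ℝ}

lemma condExp_ae_eq_of_indep_sub (hm : m ≤ mΩ) (hY : StronglyMeasurable[m] Y)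
    (hYint : Integrable Y μ) (hR : Measurable (X - Y)) (hRint : Integrable (X - Y) μ)
    (hR0 : μ[X - Y] = 0) (hind : Indep (MeasurableSpace.comap (X - Y) inferInstance) m μ) :
    μ[X | m] =ᵐ[μ] Y := by
  have hRcond : μ[X - Y | m] =ᵐ[μ] 0 := by
    refine (condExp_indep_eq hR.comap_le hm (comap_measurable _).stronglyMeasurable hind).trans ?_
    rw [hR0]
    rfl
  calc μ[X | m] = μ[Y + (X - Y) | m] := by rw [add_sub_cancel]
    _ =ᵐ[μ] μ[Y | m] + μ[X - Y | m] := condExp_add hYint hRint m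
    _ =ᵐ[μ] Y + 0 := by
      rw [condExp_of_stronglyMeasurable hm hY hYint]
      exact hRcond.mono fun ω hω => congrArg (Y ω + ·) hω
    _ = Y := add_zero Y

lemma condVar_ae_eq_of_indep_sub (hm : m ≤ mΩ) (hXY : μ[X | m] =ᵐ[μ] Y) (hR : Measurable (X - Y))
    (hR0 : μ[X - Y] = 0) (hind : Indep (MeasurableSpace.comap (X - Y) inferInstance) m μ) :
    Var[X; μ | m] =ᵐ[μ] fun _ => Var[X - Y; μ] := by
  have hsq : (X - μ[X | m]) ^ 2 =ᵐ[μ] (X - Y) ^ 2 :=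
    hXY.mono fun ω hω => congrArg (fun r => (X ω - r) ^ 2) hω
  rw [variance_of_integral_eq_zero hR.aemeasurable hR0]
  exact (condExp_congr_ae hsq).trans (condExp_indep_eq hR.comap_le hm
    ((comap_measurable _).pow_const 2).stronglyMeasurable hind)

end ConditionalLaw

section GaussianField

variable {V : Type*} [Fintype V] {μ : Measure (V → ℝ)} {K : V → V → ℝ} {A : Set V} {x : V}
  {c c' κ : V → ℝ}

/-- The σ-algebra `σ(ω y, y ∈ A)` generated by the values of the field on `A`. -/
abbrev sigmaAlgebraOn {V : Type*} (A : Set V) : MeasurableSpace (V → ℝ) :=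
  MeasurableSpace.comap (fun ω : V → ℝ => A.domRestrict ω) inferInstance

lemma measurable_dotProduct (c : V → ℝ) : Measurable (c ⬝ᵥ · : (V → ℝ) → ℝ) := by
  unfold dotProduct
  fun_prop

lemma eval_sub_dotProduct (x : V) (κ : V → ℝ) :
    (fun ω : V → ℝ => ω x) - (κ ⬝ᵥ ·) = ((Pi.single x 1 - κ) ⬝ᵥ ·) := by
  ext ω
  rw [Pi.sub_apply, sub_dotProduct, single_one_dotProduct]

lemma measurable_eval_sub_dotProduct (x : V) (κ : V → ℝ) :
    Measurable ((fun ω : V → ℝ => ω x) - (κ ⬝ᵥ ·)) :=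
  (measurable_pi_apply x).sub (measurable_dotProduct κ)

lemma stronglyMeasurable_sigmaAlgebraOn_dotProduct (hc : Function.support c ⊆ A) :
    StronglyMeasurable[sigmaAlgebraOn A] (c ⬝ᵥ · : (V → ℝ) → ℝ) := by
  have heq : (c ⬝ᵥ · : (V → ℝ) → ℝ) =
      (fun u : A → ℝ => ∑ a : A, c a * u a) ∘ fun ω => A.domRestrict ω := by
    ext ω
    rw [dotProduct_eq_sum_of_support_subset hc]
    exact Finset.sum_subtype A.toFinset (fun _ => Set.mem_toFinset) fun y => c y * ω y
  rw [heq]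
  have hsum : Measurable fun u : A → ℝ => ∑ a : A, c a * u a := by fun_prop
  exact (hsum.comp (comap_measurable _)).stronglyMeasurable

namespace IsGaussianField

lemma map_dotProduct (hμ : IsGaussianField μ K) (c : V → ℝ) :
    μ.map (c ⬝ᵥ ·) = gaussianReal 0 (c ⬝ᵥ Matrix.of K *ᵥ c).toNNReal := by
  have h := hμ.2 (Finsupp.equivFunOnFinite.symm c)
  set s := (Finsupp.equivFunOnFinite.symm c).support
  have hsupp : Function.support c ⊆ s :=
    (Finsupp.fun_support_eq (Finsupp.equivFunOnFinite.symm c)).subset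
  have hsum (f : V → ℝ) : ∑ i ∈ s, c i * f i = c ⬝ᵥ f := by
    rw [dotProduct_eq_sum_of_support_subset hsupp, Finset.toFinset_coe]
  have hquad : ∑ i ∈ s, ∑ j ∈ s, c i * c j * K i j = c ⬝ᵥ Matrix.of K *ᵥ c := by
    rw [← hsum]
    refine Finset.sum_congr rfl fun i _ => ?_
    rw [Matrix.mulVec, dotProduct_comm, ← hsum, Finset.mul_sum]
    exact Finset.sum_congr rfl fun j _ => mul_assoc _ _ _
  simp only [Finsupp.equivFunOnFinite_symm_apply_apply, hsum, hquad] at h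
  exact h

omit [Fintype V] in
lemma isGaussian [Finite V] (hμ : IsGaussianField μ K) : IsGaussian μ := by
  have := Fintype.ofFinite V
  refine isGaussian_of_map_eq_gaussianReal fun ℓ => ?_
  obtain ⟨c, hc⟩ := (dotProductEquiv ℝ V).surjective ℓ
  have hℓ : ⇑ℓ = (c ⬝ᵥ ·) := funext fun ω => (DFunLike.congr_fun hc ω).symm
  exact ⟨0, _, hℓ ▸ hμ.map_dotProduct c⟩

lemma memLp_two_dotProduct (hμ : IsGaussianField μ K) (c : V → ℝ) :
    MemLp (c ⬝ᵥ ·) 2 μ :=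
  have := hμ.isGaussian
  IsGaussian.memLp_dual μ (dotProductEquiv ℝ V c).toContinuousLinearMap 2 (by simp)

lemma integrable_dotProduct (hμ : IsGaussianField μ K) (c : V → ℝ) :
    Integrable (c ⬝ᵥ ·) μ :=
  have := hμ.1
  (hμ.memLp_two_dotProduct c).integrable one_le_two

lemma integral_dotProduct (hμ : IsGaussianField μ K) (c : V → ℝ) : ∫ ω, c ⬝ᵥ ω ∂μ = 0 := by
  have h := integral_map (measurable_dotProduct c).aemeasurable (μ := μ) (f := fun r => r)
    aestronglyMeasurable_id
  rwa [hμ.map_dotProduct c, integral_id_gaussianReal, eq_comm] at h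

lemma variance_dotProduct (hμ : IsGaussianField μ K) (hK : (Matrix.of K).PosSemidef)
    (c : V → ℝ) : Var[(c ⬝ᵥ ·); μ] = c ⬝ᵥ Matrix.of K *ᵥ c := by
  rw [← variance_id_map (measurable_dotProduct c).aemeasurable, hμ.map_dotProduct c,
    variance_id_gaussianReal]
  exact Real.coe_toNNReal _ (hK.dotProduct_mulVec_nonneg c)

lemma covariance_dotProduct (hμ : IsGaussianField μ K) (hK : (Matrix.of K).PosSemidef)
    (c c' : V → ℝ) : cov[(c ⬝ᵥ ·), (c' ⬝ᵥ ·); μ] = c' ⬝ᵥ Matrix.of K *ᵥ c := by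
  have := hμ.1
  have hsymm : c ⬝ᵥ Matrix.of K *ᵥ c' = c' ⬝ᵥ Matrix.of K *ᵥ c := by
    rw [Matrix.dotProduct_mulVec, ← Matrix.mulVec_transpose,
      ← Matrix.conjTranspose_eq_transpose_of_trivial, hK.isHermitian.eq, dotProduct_comm]
  have hadd := variance_add (hμ.memLp_two_dotProduct c) (hμ.memLp_two_dotProduct c')
  have hfun : (c ⬝ᵥ · : (V → ℝ) → ℝ) + (c' ⬝ᵥ ·) = ((c + c') ⬝ᵥ ·) :=
    funext fun ω => (add_dotProduct c c' ω).symm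
  rw [hfun, hμ.variance_dotProduct hK, hμ.variance_dotProduct hK, hμ.variance_dotProduct hK,
    Matrix.mulVec_add, dotProduct_add, add_dotProduct, add_dotProduct, hsymm] at hadd
  linarith

lemma indepFun_dotProduct_domRestrict (hμ : IsGaussianField μ K) (hK : (Matrix.of K).PosSemidef)
    (hc : EqOn (Matrix.of K *ᵥ c) 0 A) :
    IndepFun (c ⬝ᵥ ·) (fun ω : V → ℝ => A.domRestrict ω) μ := by
  have := hμ.isGaussian
  have hjoint : HasGaussianLaw (fun ω : V → ℝ => (fun _ : Unit => c ⬝ᵥ ω, fun a : A => ω a)) μ :=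
    (IsGaussian.hasGaussianLaw_id (μ := μ)).map_fun
      ((ContinuousLinearMap.pi fun _ : Unit => (dotProductEquiv ℝ V c).toContinuousLinearMap).prod
        (ContinuousLinearMap.pi fun a : A => ContinuousLinearMap.proj a.1))
  have hcov (a : A) : cov[(c ⬝ᵥ ·), fun ω => ω a; μ] = 0 := by
    have h := hμ.covariance_dotProduct hK c (Pi.single a.1 1)
    simp only [single_one_dotProduct] at h
    rw [h, hc a.2, Pi.zero_apply]
  exact (hjoint.indepFun_of_covariance_eval fun _ a => hcov a).comp
    (measurable_pi_apply ()) measurable_id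

-- The residual `ω x - κ ⬝ᵥ ω` is uncorrelated with the field on `A`, hence independent of it.
lemma indep_residual (hμ : IsGaussianField μ K) (hK : (Matrix.of K).PosSemidef)
    (hκ : IsKriging (Matrix.of K) A x κ) :
    Indep (MeasurableSpace.comap ((fun ω : V → ℝ => ω x) - (κ ⬝ᵥ ·)) inferInstance)
      (sigmaAlgebraOn A) μ := by
  rw [eval_sub_dotProduct]
  exact hμ.indepFun_dotProduct_domRestrict hK hκ.eqOn_residual

lemma integral_residual (hμ : IsGaussianField μ K) (x : V) (κ : V → ℝ) :
    μ[(fun ω : V → ℝ => ω x) - (κ ⬝ᵥ ·)] = 0 := by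
  rw [eval_sub_dotProduct]
  exact hμ.integral_dotProduct _

lemma condExp_eval_ae_eq (hμ : IsGaussianField μ K) (hK : (Matrix.of K).PosSemidef)
    (hκ : IsKriging (Matrix.of K) A x κ) :
    μ[fun ω => ω x | sigmaAlgebraOn A] =ᵐ[μ] (κ ⬝ᵥ ·) := by
  have := hμ.1
  refine condExp_ae_eq_of_indep_sub (Set.measurable_restrict A).comap_le
    (stronglyMeasurable_sigmaAlgebraOn_dotProduct hκ.support_subset)
    (hμ.integrable_dotProduct κ) (measurable_eval_sub_dotProduct x κ) ?_
    (hμ.integral_residual x κ) (hμ.indep_residual hK hκ)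
  rw [eval_sub_dotProduct]
  exact hμ.integrable_dotProduct _

lemma condVar_eval_ae_eq (hμ : IsGaussianField μ K) (hK : (Matrix.of K).PosSemidef)
    (hκ : IsKriging (Matrix.of K) A x κ) :
    Var[fun ω => ω x; μ | sigmaAlgebraOn A] =ᵐ[μ] fun _ => K x x - (Matrix.of K *ᵥ κ) x := by
  have := hμ.1
  refine (condVar_ae_eq_of_indep_sub (Set.measurable_restrict A).comap_le
    (hμ.condExp_eval_ae_eq hK hκ) (measurable_eval_sub_dotProduct x κ)
    (hμ.integral_residual x κ) (hμ.indep_residual hK hκ)).trans (ae_of_all _ fun _ => ?_)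
  simp only [eval_sub_dotProduct]
  rw [hμ.variance_dotProduct hK, hκ.residual_dotProduct_mulVec, Matrix.of_apply]

end IsGaussianField

end GaussianField

/-! ### Comparison with the tree -/

section Prediction

variable {V : Type*} {G : SimpleGraph V} {d s : ℕ} {a β γ : ℝ} {A S : Set V}
  {x xbar : V} {depth : V → ℕ} {parent : V → V}

lemma IsReg.lt_card [Finite V] (hreg : IsReg G d) (x : V) : d < Nat.card V := by
  have := Fintype.ofFinite V
  rw [← hreg.card_filter_adj x, Nat.card_eq_fintype_card]
  exact Finset.card_lt_univ_of_notMem (x := x) (by simp)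

lemma IsReg.one_le_log_card [Finite V] (hd : 2 < d) (hreg : IsReg G d) (x : V) :
    1 ≤ Real.log (Nat.card V) := by
  have hcard : (3 : ℝ) ≤ Nat.card V := by exact_mod_cast hd.trans (hreg.lt_card x)
  rw [Real.le_log_iff_exp_le (by linarith)]
  linarith [Real.exp_one_lt_three]

variable [Fintype V]

lemma IsBranch.sum_sq_greenMatrix_sub_branchPotential_le (h : IsBranch G x s S depth parent)
    (hd : 1 < d) (hβ : 0 < β) (hreg : IsReg G d) (hconn : G.Connected) (hgap : SpectralGapLB G d β)
    (hA : (A.ncard : ℝ) ≤ a) :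
    ∑ y ∈ (insert x A).toFinset,
        ((greenMatrix G d *ᵥ (Pi.single x 1 - ((d : ℝ) - 1)⁻¹ • Pi.single (parent x) 1)) y -
          branchPotential d S depth y) ^ 2 ≤ branchError d s β a (Nat.card V) := by
  obtain ⟨e, he, hee⟩ := h.exists_laplacian_branchPotential_eq hd hreg
  have hcard : ((insert x A).toFinset.card : ℝ) ≤ a + 1 := by
    rw [← Set.ncard_eq_toFinset_card']
    exact (Nat.cast_le.2 (Set.ncard_insert_le x A)).trans (by push_cast; linarith)
  have hmass : 0 ≤ ∑ y, branchPotential d S depth y :=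
    Finset.sum_nonneg fun y _ => branchPotential_nonneg hd y
  refine (sum_sq_greenMatrix_mulVec_sub_le (Nat.ne_zero_of_lt hd) hβ hreg hconn hgap he _).trans ?_
  unfold branchError
  gcongr
  · exact (Nat.cast_nonneg _).trans hcard
  · exact h.sum_branchPotential_le hd hreg

omit [Fintype V] in
lemma support_smul_single_subset {q : ℝ} (hxbar : xbar ∈ A) :
    Function.support (q • Pi.single xbar 1 : V → ℝ) ⊆ A :=
  (Function.support_const_smul_subset _ _).trans
    (Pi.support_single_subset.trans (singleton_subset_iff.2 hxbar))

lemma single_sub_smul_single_dotProduct_self_le (hd : 1 < d) (hne : x ≠ xbar) :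
    (Pi.single x 1 - ((d : ℝ) - 1)⁻¹ • Pi.single xbar 1 : V → ℝ) ⬝ᵥ
      (Pi.single x 1 - ((d : ℝ) - 1)⁻¹ • Pi.single xbar 1) ≤ 2 := by
  have hd' : (1 : ℝ) ≤ d - 1 := by
    have : (2 : ℝ) ≤ d := by exact_mod_cast hd
    linarith
  have hq : ((d : ℝ) - 1)⁻¹ ≤ 1 := inv_le_one_of_one_le₀ hd'
  have hq0 : 0 ≤ ((d : ℝ) - 1)⁻¹ := by positivity
  have hself : (Pi.single x 1 - ((d : ℝ) - 1)⁻¹ • Pi.single xbar 1 : V → ℝ) ⬝ᵥ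
      (Pi.single x 1 - ((d : ℝ) - 1)⁻¹ • Pi.single xbar 1) = 1 + ((d : ℝ) - 1)⁻¹ ^ 2 := by
    simp [hne, hne.symm, sq]
  rw [hself]
  nlinarith

lemma GoodVertex.exists_isKriging_greenMatrix (hgood : GoodVertex G A s x) (hs : 0 < s)
    (hd : 1 < d) (hβ : 0 < β) (hreg : IsReg G d) (hconn : G.Connected)
    (hgap : SpectralGapLB G d β) (hxbar : xbar ∈ A) (hadj : G.Adj x xbar)
    (hA : (A.ncard : ℝ) ≤ a) (hγ : 0 < γ) (hγA : γ ≤ (1 - A.ncard / Nat.card V) / 2) :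
    ∃ κ, IsKriging (greenMatrix G d) A x κ ∧
      γ ^ 2 * ((κ - ((d : ℝ) - 1)⁻¹ • Pi.single xbar 1) ⬝ᵥ
        (κ - ((d : ℝ) - 1)⁻¹ • Pi.single xbar 1)) ≤ branchError d s β a (Nat.card V) ∧
      |greenMatrix G d x x - (greenMatrix G d *ᵥ κ) x - d / (d - 1)| ≤
        √(2 * branchError d s β a (Nat.card V)) + branchError d s β a (Nat.card V) / γ := by
  have hd0 : d ≠ 0 := Nat.ne_zero_of_lt hd
  obtain ⟨S, hSA, depth, parent, hbranch, rfl⟩ := hgood.exists_isBranch hs hxbar hadj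
  have hcoer : CoerciveOn (greenMatrix G d) A γ :=
    (coerciveOn_greenMatrix hd0 hβ hreg hconn hgap A).mono hγA
  obtain ⟨κ, hκ⟩ := hcoer.exists_isKriging hγ x
  have hv := support_smul_single_subset (q := ((d : ℝ) - 1)⁻¹) hxbar
  have hφ : EqOn (branchPotential d S depth) 0 A := fun y hy =>
    indicator_of_notMem (disjoint_right.1 hSA hy) _
  have hε := hbranch.sum_sq_greenMatrix_sub_branchPotential_le hd hβ hreg hconn hgap hA
  have hε0 : 0 ≤ branchError d s β a (Nat.card V) :=
    (Finset.sum_nonneg fun _ _ => sq_nonneg _).trans hε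
  refine ⟨κ, hκ, hκ.sq_mul_dotProduct_sub_self_le hcoer hγ.le hv hφ hε, ?_⟩
  rw [← hbranch.branchPotential_root]
  refine (hκ.abs_variance_sub_le (greenMatrix_isSymm hd0 hβ hreg hconn hgap) hcoer hγ hv hφ
    hε).trans ?_
  gcongr
  exact single_sub_smul_single_dotProduct_self_le hd hadj.ne

end Prediction

universe u

section Uniform

variable {V : Type*} [Fintype V] {S : Set V} {f w : V → ℝ} {t : ℝ}

lemma sq_dotProduct_le_ncard_mul_sq (hw : Function.support w ⊆ S) (hf : ∀ y ∈ S, |f y| ≤ t) :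
    (w ⬝ᵥ f) ^ 2 ≤ (w ⬝ᵥ w) * (S.ncard * t ^ 2) := by
  refine (sq_dotProduct_le_of_support_subset hw f).trans ?_
  gcongr
  · exact dotProduct_self_nonneg w
  · rw [Set.ncard_eq_toFinset_card', ← nsmul_eq_mul]
    exact Finset.sum_le_card_nsmul _ _ _ fun y hy => sq_le_sq.2
      ((hf y (Set.mem_toFinset.1 hy)).trans (le_abs_self t))

lemma IsKriging.abs_dotProduct_sub_le {K : Matrix V V ℝ} {A : Set V} {x xbar : V} {κ : V → ℝ}
    {q b b' C ℓ : ℝ} (hκ : IsKriging K A x κ) (hxbar : xbar ∈ A) (hC : 0 ≤ C) (hℓ : 0 < ℓ)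
    (hA : A.ncard ≤ b * ℓ)
    (hweight : (κ - q • Pi.single xbar 1) ⬝ᵥ (κ - q • Pi.single xbar 1) ≤ C / ℓ ^ 8)
    (hf : ∀ y ∈ A, |f y| ≤ b' * √ℓ) :
    |κ ⬝ᵥ f - q * f xbar| ≤ √(C * (b * b' ^ 2)) / ℓ ^ 3 := by
  have hsq : ((κ - q • Pi.single xbar 1) ⬝ᵥ f) ^ 2 ≤ C * (b * b' ^ 2) / (ℓ ^ 3) ^ 2 := calc
    _ ≤ _ := sq_dotProduct_le_ncard_mul_sq
      (hκ.support_sub_subset (support_smul_single_subset hxbar)) hf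
    _ ≤ C / ℓ ^ 8 * (b * ℓ * (b' * √ℓ) ^ 2) := by gcongr
    _ = C * (b * b' ^ 2) / (ℓ ^ 3) ^ 2 := by
      rw [mul_pow, Real.sq_sqrt hℓ.le]
      field_simp
  have heval : (κ - q • Pi.single xbar 1) ⬝ᵥ f = κ ⬝ᵥ f - q * f xbar := by
    rw [sub_dotProduct, smul_dotProduct, single_one_dotProduct, smul_eq_mul]
  rw [← heval, ← Real.sqrt_sq (pow_nonneg hℓ.le 3), ← Real.sqrt_div' _ (by positivity)]
  exact Real.abs_le_sqrt hsq

lemma exists_isKriging_greenMatrix_of_ncard_le {d : ℕ} {β : ℝ} (hd : 2 < d) (hβ : 0 < β) (b : ℝ) :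
    ∃ C > 0, ∀ {V : Type u} [Fintype V] {G : SimpleGraph V} {A : Set V} {x xbar : V},
      G.Connected → IsReg G d → SpectralGapLB G d β →
      (A.ncard : ℝ) ≤ b * Real.log (Nat.card V) →
      GoodVertex G A (sn d (Nat.card V)) x → xbar ∈ A → G.Adj x xbar →
      ∃ κ, IsKriging (greenMatrix G d) A x κ ∧
        (κ - ((d : ℝ) - 1)⁻¹ • Pi.single xbar 1) ⬝ᵥ (κ - ((d : ℝ) - 1)⁻¹ • Pi.single xbar 1) ≤
          C / Real.log (Nat.card V) ^ 8 ∧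
        |greenMatrix G d x x - (greenMatrix G d *ᵥ κ) x - d / (d - 1)| ≤
          C / Real.log (Nat.card V) ^ 4 := by
  obtain ⟨γ, hγ, hγA⟩ := exists_pos_le_one_sub_div b
  obtain ⟨C, hC, hbound⟩ := exists_branchError_le hd β b
  refine ⟨C / γ ^ 2 + (√(2 * C) + C / γ), by positivity, ?_⟩
  intro V _ G A x xbar hconn hreg hgap hA hgood hxbar hadj
  have hlog : 1 ≤ Real.log (Nat.card V) := hreg.one_le_log_card hd x
  have hAcard : A.ncard < Nat.card V := by
    rw [← Set.ncard_univ]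
    exact Set.ncard_lt_ncard (Set.ssubset_univ_iff.2 fun h => hgood.1 (h ▸ mem_univ x))
  obtain ⟨κ, hκ, hweight, hvar⟩ := hgood.exists_isKriging_greenMatrix (one_le_sn d _)
    (Nat.lt_of_succ_lt hd) hβ hreg hconn hgap hxbar hadj hA hγ (hγA _ _ hAcard hA)
  have hε := hbound (Nat.card V) (by linarith)
  set ℓ := Real.log (Nat.card V)
  refine ⟨κ, hκ, ?_, hvar.trans ?_⟩
  · calc
      _ ≤ C / ℓ ^ 8 / γ ^ 2 := by
        rw [le_div_iff₀' (by positivity)]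
        exact hweight.trans hε
      _ = C / γ ^ 2 / ℓ ^ 8 := div_right_comm _ _ _
      _ ≤ (C / γ ^ 2 + (√(2 * C) + C / γ)) / ℓ ^ 8 := by
        gcongr
        exact le_add_of_nonneg_right (by positivity)
  · have hsqrt : √(2 * (C / ℓ ^ 8)) = √(2 * C) / ℓ ^ 4 := by
      rw [← mul_div_assoc, Real.sqrt_div' _ (by positivity), show ℓ ^ 8 = (ℓ ^ 4) ^ 2 by ring,
        Real.sqrt_sq (by positivity)]
    calc
      _ ≤ √(2 * (C / ℓ ^ 8)) + C / ℓ ^ 8 / γ := by gcongr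
      _ ≤ √(2 * C) / ℓ ^ 4 + C / ℓ ^ 4 / γ := by
        rw [hsqrt]
        gcongr
        norm_num
      _ = (√(2 * C) + C / γ) / ℓ ^ 4 := by rw [div_right_comm, add_div]
      _ ≤ (C / γ ^ 2 + (√(2 * C) + C / γ)) / ℓ ^ 4 := by
        gcongr ?_ / _
        exact le_add_of_nonneg_left (by positivity)

end Uniform

end GFF

theorem good_vertex_conditional_law_general.{u} {d : ℕ} (hd : 3 ≤ d) {β : ℝ} (hβ : 0 < β)
    (b b' : ℝ) :
    ∃ c : ℝ, 0 < c ∧ ∀ {V : Type u} [Fintype V] {G : SimpleGraph V},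
      G.Connected → GFF.IsReg G d → GFF.SpectralGapLB G d β →
      ∀ {μ : Measure (V → ℝ)}, GFF.IsGaussianField μ (GFF.zGreen G d (Nat.card V)) →
      ∀ {A : Set V} {x xbar : V}, (A.ncard : ℝ) ≤ b * Real.log (Nat.card V) →
      GFF.GoodVertex G A (GFF.sn d (Nat.card V)) x → xbar ∈ A → G.Adj x xbar →
      ∀ᵐ ω ∂μ, (∀ z ∈ A, |ω z| ≤ b' * √(Real.log (Nat.card V))) →
        |μ[fun ω' => ω' x | GFF.sigmaAlgebraOn A] ω - ((d : ℝ) - 1)⁻¹ * ω xbar| ≤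
          c / Real.log (Nat.card V) ^ 2 ∧
        |Var[fun ω' => ω' x; μ | GFF.sigmaAlgebraOn A] ω - d / (d - 1)| ≤
          c / Real.log (Nat.card V) ^ 3 := by
  obtain ⟨C, hC, hkriging⟩ := GFF.exists_isKriging_greenMatrix_of_ncard_le hd hβ b
  refine ⟨C + √(C * (b * b' ^ 2)), by positivity, ?_⟩
  intro V _ G hconn hreg hgap μ hμ A x xbar hA hgood hxbar hadj
  obtain ⟨κ, hκ, hweight, hvar⟩ := hkriging hconn hreg hgap hA hgood hxbar hadj
  have hlog : 1 ≤ Real.log (Nat.card V) := hreg.one_le_log_card hd x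
  have hK := GFF.greenMatrix_posSemidef (by omega) hβ hreg hconn hgap
  filter_upwards [hμ.condExp_eval_ae_eq hK hκ, hμ.condVar_eval_ae_eq hK hκ] with ω hE hVar hω
  rw [hE, hVar]
  constructor
  · refine (hκ.abs_dotProduct_sub_le hxbar hC.le (by linarith) hA hweight hω).trans
      (div_le_div₀ (by positivity) ?_ (by positivity) ?_)
    · exact le_add_of_nonneg_left hC.le
    · exact pow_le_pow_right₀ hlog (by norm_num)
  · refine hvar.trans (div_le_div₀ (by positivity) ?_ (by positivity) ?_)
    · exact le_add_of_nonneg_right (by positivity)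
    · exact pow_le_pow_right₀ hlog (by norm_num)

/-- near the boundary of `A`, at a good vertex, the conditional law of the
zero-average GFF is close to that of the tree GFF. -/
theorem good_vertex_conditional_law
    (d : ℕ) (hd : 3 ≤ d)
    (V : ℕ → Type) [∀ n, Fintype (V n)]
    (G : ∀ n, SimpleGraph (V n)) (N : ℕ → ℕ) (α β : ℝ)
    (hα : 0 < α ∧ α ≤ 1) (hβ : 0 < β ∧ β ≤ 2)
    (hNmono : StrictMono N) (hNpos : ∀ n, 1 ≤ N n)
    (hcard : ∀ n, Nat.card (V n) = N n)
    (hconn : ∀ n, (G n).Connected)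
    (hreg : ∀ n, GFF.IsReg (G n) d)
    (hcyc : ∀ n (x : V n),
      GFF.adjPairs (G n) (GFF.gball (G n) x ⌊α * Real.logb ((d : ℝ) - 1) (N n : ℝ)⌋₊) ≤
        2 * (GFF.gball (G n) x ⌊α * Real.logb ((d : ℝ) - 1) (N n : ℝ)⌋₊).ncard)
    (hgap : ∀ n, GFF.SpectralGapLB (G n) d β)
    (μ : ∀ n, Measure (V n → ℝ))
    (hμ : ∀ n, GFF.IsGaussianField (μ n) (GFF.zGreen (G n) d (N n)))
    (b b' : ℝ) (hb : 0 < b) (hb' : 0 < b') :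
    ∃ c : ℝ, 0 < c ∧
      ∀ (n : ℕ) (A : Set (V n)) (x xbar : V n),
        A.Nonempty → (A.ncard : ℝ) ≤ b * Real.log (N n) →
        GFF.GoodVertex (G n) A (GFF.sn d (N n)) x →
        xbar ∈ A → (G n).Adj x xbar →
        ∀ᵐ ω ∂ μ n,
          (∀ z ∈ A, |ω z| ≤ b' * Real.sqrt (Real.log (N n))) →
            (|condExp
                  (MeasurableSpace.comap (fun ω' : V n → ℝ => A.restrict ω') inferInstance)
                  (μ n) (fun ω' => ω' x) ω
                - ((d : ℝ) - 1)⁻¹ * ω xbar| ≤ c / Real.log (N n) ^ 2) ∧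
            (|condExp
                  (MeasurableSpace.comap (fun ω' : V n → ℝ => A.restrict ω') inferInstance)
                  (μ n)
                  (fun ω' => (ω' x -
                    condExp
                      (MeasurableSpace.comap
                        (fun ω'' : V n → ℝ => A.restrict ω'') inferInstance)
                      (μ n) (fun ω'' => ω'' x) ω') ^ 2) ω
                - (d : ℝ) / ((d : ℝ) - 1)| ≤ c / Real.log (N n) ^ 3) := by
  obtain ⟨c, hc, h⟩ := good_vertex_conditional_law_general hd hβ.1 b b'
  simp only [← hcard] at hμ ⊢
  exact ⟨c, hc, fun n A x xbar _ => h (hconn n) (hreg n) (hgap n) (hμ n)⟩
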